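/- arXiv:2310.12556 — 3 statements merged into one kernel-verified Lean document; each statement's English description precedes it below -/
import Mathlib

section
/- Let H = H_{m,𝓑,S,A} be the parity-check matrix of an APM-LDPC code. For every cycle of length 2l in the Tanner graph TG(H), there exists a chain (i_0, j_0, i_1, j_1, …, i_{l−1}, j_{l−1}) with i_l := i_0, recording the blocks of H traversed by the cycle, such that for each 1 ≤ k ≤ l: {i_{k−1}, i_k} ⊆ B_{j_{k−1}}, i_{k−1} ≠ i_k, j_{k−1} ≠ j_{k mod l}, and, defining p_h = ∏_{k=h}^{l−1} a_{i_{k+1},j_k}·a_{i_k,j_k}^{−1} mod m for 0 ≤ h ≤ l−1 with p_l := 1, and Δ = Σ_{k=0}^{l−1} (p_k·s_{i_k,j_k} − p_{k+1}·s_{i_{k+1},j_k}), one of the following holds: (1) p_0 = 1 and Δ ≡ 0 (mod m), or (2) gcd(p_0 − 1, m) divides Δ. -/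
/-!
Statement 0: Every 2l-cycle in the Tanner graph of the APM parity-check matrix
H_{m,𝓑,S,A} corresponds to a chain (i_0,j_0,…,i_{l−1},j_{l−1}) satisfying the
modular conditions of Theorem 1 of the paper.
-/

/-- Vertex type of the Tanner graph of a `v m × k m` block matrix:
check nodes `(i, r)` (row-block `i`, row index `r` within the block) and
variable nodes `(j, c)` (column-block `j`, column index `c` within the block). -/
abbrev TannerVertex (v k m : ℕ) := (Fin v × ZMod m) ⊕ (Fin k × ZMod m)

/-- The Tanner graph of `H_{m,𝓑,S,A}`, where `Bl j` is the block `B_j` of the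
design `𝓑`, `S` is the `(m,𝓑)`-slope vector, and `a` is the `(m,𝓑)`-shift
vector (with values the units of `ℤ_m`, i.e. residues coprime to `m`):
a check node `(i, r)` is adjacent to a variable node `(j, c)` iff `i ∈ B_j` and
`r = a_{i,j}·c + s_{i,j}` (the `(r,c)` entry of the APM `I^{s_{i,j},a_{i,j}}`
equals 1). -/
def apmTannerGraph (v k m : ℕ) (Bl : Fin k → Finset (Fin v))
    (S : Fin v → Fin k → ZMod m) (a : Fin v → Fin k → (ZMod m)ˣ) :
    SimpleGraph (TannerVertex v k m) :=
  SimpleGraph.fromRel (fun x y =>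
    ∃ (i : Fin v) (r : ZMod m) (j : Fin k) (c : ZMod m),
      x = Sum.inl (i, r) ∧ y = Sum.inr (j, c) ∧ i ∈ Bl j ∧
        r = (a i j : ZMod m) * c + S i j)

/-!
Along a closed walk that visits check nodes `(i t, r t)` and variable nodes `(j t, c t)`
alternately, adjacency says `r t = a (i t) (j t) * c t + S (i t) (j t)` and
`r (t + 1) = a (i (t + 1)) (j t) * c t + S (i (t + 1)) (j t)`. The weights `p t` are chosen so that
`p t * a (i t) (j t) = p (t + 1) * a (i (t + 1)) (j t)`; hence the unknowns `c t` cancel from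
`p t * r t - p (t + 1) * r (t + 1)`, and summing over one period telescopes to
`Δ = p 0 * r 0 - p l * r l = (p 0 - 1) * r 0`. So `p 0 - 1` divides `Δ` in `ZMod m`.

Consecutive blocks of the same kind are distinct because an affine permutation matrix has a single
`1` in each row and each column: two equal blocks would force the walk to backtrack.
-/

section Arithmetic

/-- The weight `p_h = ∏_{t=h}^{l-1} a_{i_{t+1},j_t} · a_{i_t,j_t}⁻¹` of the chain
`(i_0, j_0, …, i_{l-1}, j_{l-1})`; it is `1` for `l ≤ h`. -/
def chainWeight {ι κ M : Type*} [CommMonoid M] (a : ι → κ → Mˣ) (i : ℕ → ι) (j : ℕ → κ)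
    (l h : ℕ) : Mˣ :=
  ∏ t ∈ Finset.Ico h l, a (i (t + 1)) (j t) * (a (i t) (j t))⁻¹

theorem chainWeight_mul_eq_chainWeight_succ_mul {ι κ M : Type*} [CommMonoid M] (a : ι → κ → Mˣ)
    (i : ℕ → ι) (j : ℕ → κ) {l t : ℕ} (ht : t < l) :
    chainWeight a i j l t * a (i t) (j t) =
      chainWeight a i j l (t + 1) * a (i (t + 1)) (j t) := by
  rw [chainWeight, Finset.prod_eq_prod_Ico_succ_bot ht, mul_right_comm, inv_mul_cancel_right,
    mul_comm, chainWeight]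

variable {ι κ R : Type*} [CommRing R]

/-- The weighted alternating sum `Δ` of the slopes met along the chain
`(i_0, j_0, …, i_{l-1}, j_{l-1})`, which measures how far the chain is from lifting to a closed
walk. -/
def chainDefect (S : ι → κ → R) (a : ι → κ → Rˣ) (i : ℕ → ι) (j : ℕ → κ) (l : ℕ) : R :=
  ∑ t ∈ Finset.range l, ((chainWeight a i j l t : R) * S (i t) (j t) -
    (chainWeight a i j l (t + 1) : R) * S (i (t + 1)) (j t))

theorem chainDefect_eq_chainWeight_mul_sub {S : ι → κ → R} {a : ι → κ → Rˣ} {i : ℕ → ι}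
    {j : ℕ → κ} {r c : ℕ → R} {l : ℕ}
    (hr : ∀ t < l, r t = a (i t) (j t) * c t + S (i t) (j t))
    (hr_succ : ∀ t < l, r (t + 1) = a (i (t + 1)) (j t) * c t + S (i (t + 1)) (j t)) :
    chainDefect S a i j l = chainWeight a i j l 0 * r 0 - r l := by
  let p : ℕ → R := fun t => chainWeight a i j l t
  have hp_last : p l = 1 := by simp [p, chainWeight]
  calc
    chainDefect S a i j l = ∑ t ∈ Finset.range l, (p t * r t - p (t + 1) * r (t + 1)) := by
      refine Finset.sum_congr rfl fun t ht => ?_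
      have ht : t < l := Finset.mem_range.1 ht
      have hp : p t * a (i t) (j t) = p (t + 1) * a (i (t + 1)) (j t) :=
        congrArg Units.val (chainWeight_mul_eq_chainWeight_succ_mul a i j ht)
      linear_combination -p t * hr t ht + p (t + 1) * hr_succ t ht - c t * hp
    _ = p 0 * r 0 - r l := by
      rw [Finset.sum_range_sub' fun t => p t * r t, hp_last, one_mul]

theorem gcd_val_dvd_val_of_dvd {m : ℕ} {q d : ZMod m} (h : q ∣ d) :
    Nat.gcd q.val m ∣ d.val := by
  obtain ⟨x, rfl⟩ := h
  rcases m with _ | m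
  · rw [Nat.gcd_zero_right]
    exact ⟨Int.natAbs x, Int.natAbs_mul q x⟩
  · rw [ZMod.val_mul, Nat.dvd_mod_iff (Nat.gcd_dvd_right _ _)]
    exact (Nat.gcd_dvd_left _ _).mul_right _

end Arithmetic

section ClosedWalks

variable {V : Type*} {G : SimpleGraph V} {u : V}

/-- The vertices of a closed walk, indexed periodically by all natural numbers. -/
def cyclicVert (C : G.Walk u u) (n : ℕ) : V :=
  C.getVert (n % C.length)

theorem cyclicVert_periodic (C : G.Walk u u) : Function.Periodic (cyclicVert C) C.length :=
  fun n => by simp only [cyclicVert, Nat.add_mod_right]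

theorem cyclicVert_of_le_length (C : G.Walk u u) {n : ℕ} (hn : n ≤ C.length) :
    cyclicVert C n = C.getVert n := by
  rcases hn.lt_or_eq with hn | rfl
  · rw [cyclicVert, Nat.mod_eq_of_lt hn]
  · rw [cyclicVert, Nat.mod_self, C.getVert_zero, C.getVert_length]

theorem adj_cyclicVert_succ (C : G.Walk u u) (hC : 0 < C.length) (n : ℕ) :
    G.Adj (cyclicVert C n) (cyclicVert C (n + 1)) := by
  have hn : n % C.length < C.length := Nat.mod_lt n hC
  have hsucc : cyclicVert C (n + 1) = C.getVert (n % C.length + 1) := by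
    rw [← cyclicVert_of_le_length C (Nat.add_one_le_of_lt hn), cyclicVert, cyclicVert,
      Nat.mod_add_mod]
  rw [hsucc]
  exact C.adj_getVert_succ hn

/-- A closed walk is cyclically reduced (tailless and backtrackless) if it never returns
immediately along the edge it has just traversed, not even when passing through its base point.
With this encoding the walk of length zero is not cyclically reduced. -/
def IsCyclicallyReduced (C : G.Walk u u) : Prop :=
  ∀ n, cyclicVert C n ≠ cyclicVert C (n + 2)

theorem IsCyclicallyReduced.length_pos {C : G.Walk u u} (hC : IsCyclicallyReduced C) :
    0 < C.length := by
  refine Nat.pos_of_ne_zero fun h => hC 0 ?_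
  rw [cyclicVert, cyclicVert, C.getVert_of_length_le (by simp [h]),
    C.getVert_of_length_le (by simp [h])]

theorem isCyclicallyReduced_of_isCycle {C : G.Walk u u} (hC : C.IsCycle) :
    IsCyclicallyReduced C := by
  intro n hn
  have hlen : 3 ≤ C.length := hC.three_le_length
  have hmod_le (n : ℕ) : n % C.length ≤ C.length - 1 := Nat.le_pred_of_lt (Nat.mod_lt n (by lia))
  have hmod : n ≡ n + 2 [MOD C.length] := hC.getVert_injOn' (hmod_le n) (hmod_le (n + 2)) hn
  have hdvd : C.length ∣ 2 := by
    simpa using (Nat.modEq_iff_dvd' (Nat.le_add_right n 2)).1 hmod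
  have := Nat.le_of_dvd two_pos hdvd
  lia

/-- A cyclically reduced closed walk of length `N`, given by the `N`-periodic sequence of its
vertices; in this form its base point can be moved by shifting the sequence. -/
structure IsReducedTour (G : SimpleGraph V) (N : ℕ) (g : ℕ → V) : Prop where
  periodic : Function.Periodic g N
  adj : ∀ n, G.Adj (g n) (g (n + 1))
  ne_add_two : ∀ n, g n ≠ g (n + 2)

theorem IsCyclicallyReduced.isReducedTour {C : G.Walk u u} (hC : IsCyclicallyReduced C) :
    IsReducedTour G C.length (cyclicVert C) :=
  ⟨cyclicVert_periodic C, adj_cyclicVert_succ C hC.length_pos, hC⟩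

theorem IsReducedTour.shift {N : ℕ} {g : ℕ → V} (hg : IsReducedTour G N g) (s : ℕ) :
    IsReducedTour G N fun n => g (n + s) where
  periodic := hg.periodic.add_const s
  adj n := by rw [add_right_comm]; exact hg.adj _
  ne_add_two n := by rw [add_right_comm]; exact hg.ne_add_two _

end ClosedWalks

section TannerGraph

variable {v k m : ℕ} {Bl : Fin k → Finset (Fin v)} {S : Fin v → Fin k → ZMod m}
  {a : Fin v → Fin k → (ZMod m)ˣ}

theorem apmTannerGraph_adj_inl_inr {x : Fin v × ZMod m} {y : Fin k × ZMod m} :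
    (apmTannerGraph v k m Bl S a).Adj (Sum.inl x) (Sum.inr y) ↔
      x.1 ∈ Bl y.1 ∧ x.2 = a x.1 y.1 * y.2 + S x.1 y.1 := by
  rcases x with ⟨i, r⟩
  rcases y with ⟨j, c⟩
  simp [apmTannerGraph, and_comm]

theorem exists_eq_inr_of_adj_inl {x : Fin v × ZMod m} {z : TannerVertex v k m}
    (h : (apmTannerGraph v k m Bl S a).Adj (Sum.inl x) z) : ∃ y, z = Sum.inr y := by
  rcases z with z | y
  · simp [apmTannerGraph] at h
  · exact ⟨y, rfl⟩

theorem exists_eq_inl_of_adj_inr {y : Fin k × ZMod m} {z : TannerVertex v k m}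
    (h : (apmTannerGraph v k m Bl S a).Adj (Sum.inr y) z) : ∃ x, z = Sum.inl x := by
  rcases z with x | z
  · exact ⟨x, rfl⟩
  · simp [apmTannerGraph] at h

theorem check_eq_of_adj_of_fst_eq {x x' : Fin v × ZMod m} {y : Fin k × ZMod m}
    (h : (apmTannerGraph v k m Bl S a).Adj (Sum.inl x) (Sum.inr y))
    (h' : (apmTannerGraph v k m Bl S a).Adj (Sum.inl x') (Sum.inr y))
    (hfst : x.1 = x'.1) : x = x' := by
  refine Prod.ext hfst ?_
  rw [(apmTannerGraph_adj_inl_inr.1 h).2, (apmTannerGraph_adj_inl_inr.1 h').2, hfst]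

theorem variable_eq_of_adj_of_fst_eq {x : Fin v × ZMod m} {y y' : Fin k × ZMod m}
    (h : (apmTannerGraph v k m Bl S a).Adj (Sum.inl x) (Sum.inr y))
    (h' : (apmTannerGraph v k m Bl S a).Adj (Sum.inl x) (Sum.inr y'))
    (hfst : y.1 = y'.1) : y = y' := by
  refine Prod.ext hfst ((a x.1 y'.1).mul_right_inj.1 (add_right_cancel (b := S x.1 y'.1) ?_))
  rw [← (apmTannerGraph_adj_inl_inr.1 h').2, (apmTannerGraph_adj_inl_inr.1 h).2, hfst]

variable (Bl S a) in
/-- A cyclically reduced closed walk of length `2 * l` in the Tanner graph, split into the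
`l`-periodic sequence `x` of its check nodes and the `l`-periodic sequence `y` of its variable
nodes, traversed in the order `x 0, y 0, x 1, y 1, …`. -/
structure IsTannerTour (l : ℕ) (x : ℕ → Fin v × ZMod m) (y : ℕ → Fin k × ZMod m) : Prop where
  check_periodic : Function.Periodic x l
  variable_periodic : Function.Periodic y l
  adj : ∀ t, (apmTannerGraph v k m Bl S a).Adj (Sum.inl (x t)) (Sum.inr (y t))
  adj_succ : ∀ t, (apmTannerGraph v k m Bl S a).Adj (Sum.inl (x (t + 1))) (Sum.inr (y t))
  check_ne_succ : ∀ t, x t ≠ x (t + 1)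
  variable_ne_succ : ∀ t, y t ≠ y (t + 1)

namespace IsTannerTour

variable {l : ℕ} {x : ℕ → Fin v × ZMod m} {y : ℕ → Fin k × ZMod m}

theorem check_fst_ne_succ (h : IsTannerTour Bl S a l x y) (t : ℕ) : (x t).1 ≠ (x (t + 1)).1 :=
  fun hfst => h.check_ne_succ t (check_eq_of_adj_of_fst_eq (h.adj t) (h.adj_succ t) hfst)

theorem variable_fst_ne_succ (h : IsTannerTour Bl S a l x y) (t : ℕ) :
    (y t).1 ≠ (y (t + 1)).1 :=
  fun hfst =>
    h.variable_ne_succ t (variable_eq_of_adj_of_fst_eq (h.adj_succ t) (h.adj (t + 1)) hfst)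

theorem chainWeight_sub_one_dvd_chainDefect (h : IsTannerTour Bl S a l x y) :
    (chainWeight a (fun t => (x t).1) (fun t => (y t).1) l 0 : ZMod m) - 1 ∣
      chainDefect S a (fun t => (x t).1) (fun t => (y t).1) l := by
  have hclosed : x l = x 0 := h.check_periodic.eq
  refine ⟨(x 0).2, ?_⟩
  rw [chainDefect_eq_chainWeight_mul_sub (r := fun t => (x t).2) (c := fun t => (y t).2)
    (fun t _ => (apmTannerGraph_adj_inl_inr.1 (h.adj t)).2)
    (fun t _ => (apmTannerGraph_adj_inl_inr.1 (h.adj_succ t)).2), hclosed]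
  ring

end IsTannerTour

theorem IsReducedTour.exists_isTannerTour_of_inl {l : ℕ} {g : ℕ → TannerVertex v k m}
    (hg : IsReducedTour (apmTannerGraph v k m Bl S a) (2 * l) g) (h0 : ∃ x, g 0 = Sum.inl x) :
    ∃ x y, IsTannerTour Bl S a l x y ∧
      ∀ t, g (2 * t) = Sum.inl (x t) ∧ g (2 * t + 1) = Sum.inr (y t) := by
  have hodd_of_even (t : ℕ) (ht : ∃ x, g (2 * t) = Sum.inl x) :
      ∃ y, g (2 * t + 1) = Sum.inr y := by
    obtain ⟨x, hx⟩ := ht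
    exact exists_eq_inr_of_adj_inl (hx ▸ hg.adj (2 * t))
  have heven (t : ℕ) : ∃ x, g (2 * t) = Sum.inl x := by
    induction t with
    | zero => exact h0
    | succ t ih =>
      obtain ⟨y, hy⟩ := hodd_of_even t ih
      exact exists_eq_inl_of_adj_inr (hy ▸ hg.adj (2 * t + 1))
  choose x hx using heven
  choose y hy using fun t => hodd_of_even t ⟨x t, hx t⟩
  have htour : IsTannerTour Bl S a l x y :=
    { check_periodic := fun t => by
        have := hg.periodic (2 * t)
        rwa [← mul_add, hx, hx, Sum.inl.injEq] at this
      variable_periodic := fun t => by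
        have := hg.periodic (2 * t + 1)
        rwa [add_right_comm, ← mul_add, hy, hy, Sum.inr.injEq] at this
      adj := fun t => hx t ▸ hy t ▸ hg.adj (2 * t)
      adj_succ := fun t => hx (t + 1) ▸ hy t ▸ (hg.adj (2 * t + 1)).symm
      check_ne_succ := fun t ht =>
        hg.ne_add_two (2 * t) ((hx t).trans (ht ▸ (hx (t + 1)).symm))
      variable_ne_succ := fun t ht =>
        hg.ne_add_two (2 * t + 1) ((hy t).trans (ht ▸ (hy (t + 1)).symm)) }
  exact ⟨x, y, htour, fun t => ⟨hx t, hy t⟩⟩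

theorem IsReducedTour.exists_isTannerTour {l : ℕ} {g : ℕ → TannerVertex v k m}
    (hg : IsReducedTour (apmTannerGraph v k m Bl S a) (2 * l) g) (hl : 0 < l) :
    ∃ x y, IsTannerTour Bl S a l x y ∧
      ((∀ t, g (2 * t) = Sum.inl (x t) ∧ g (2 * t + 1) = Sum.inr (y t)) ∨
        ∀ t, g (2 * t) = Sum.inr (y t) ∧ g (2 * t + 1) = Sum.inl (x (t + 1))) := by
  rcases h0 : g 0 with x₀ | y₀
  · obtain ⟨x, y, htour, hg_eq⟩ := hg.exists_isTannerTour_of_inl ⟨x₀, h0⟩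
    exact ⟨x, y, htour, Or.inl hg_eq⟩
  · -- Start one step earlier, at the check node preceding `y₀`.
    have hlast : ∃ x, g (0 + (2 * l - 1)) = Sum.inl x := by
      have hadj := hg.adj (0 + (2 * l - 1))
      rw [show 0 + (2 * l - 1) + 1 = 0 + 2 * l by lia, hg.periodic, h0] at hadj
      exact exists_eq_inl_of_adj_inr hadj.symm
    obtain ⟨x, y, htour, hg_eq⟩ := (hg.shift (2 * l - 1)).exists_isTannerTour_of_inl hlast
    refine ⟨x, y, htour, Or.inr fun t => ⟨?_, ?_⟩⟩
    · rw [← (hg_eq t).2, ← hg.periodic]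
      congr 1
      lia
    · rw [← (hg_eq (t + 1)).1, ← hg.periodic]
      congr 1
      lia

theorem IsCyclicallyReduced.exists_isTannerTour {l : ℕ} {u : TannerVertex v k m}
    {C : (apmTannerGraph v k m Bl S a).Walk u u} (hC : IsCyclicallyReduced C)
    (hlen : C.length = 2 * l) :
    ∃ x y, IsTannerTour Bl S a l x y ∧
      ((∀ t < l, C.getVert (2 * t) = Sum.inl (x t) ∧ C.getVert (2 * t + 1) = Sum.inr (y t)) ∨
        ∀ t < l, C.getVert (2 * t) = Sum.inr (y t) ∧
          C.getVert (2 * t + 1) = Sum.inl (x (t + 1))) := by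
  have hl : 0 < l := by have := hC.length_pos; lia
  obtain ⟨x, y, htour, hvert⟩ := (hlen ▸ hC.isReducedTour).exists_isTannerTour hl
  refine ⟨x, y, htour, hvert.imp (fun h t ht => ?_) fun h t ht => ?_⟩ <;>
  · rw [← cyclicVert_of_le_length C (by lia), ← cyclicVert_of_le_length C (by lia)]
    exact h t

end TannerGraph

theorem every_apm_cycle_gives_chain_general {v k m l : ℕ}
    {Bl : Fin k → Finset (Fin v)} {S : Fin v → Fin k → ZMod m} {a : Fin v → Fin k → (ZMod m)ˣ}
    {u : TannerVertex v k m} {C : (apmTannerGraph v k m Bl S a).Walk u u}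
    (hC : IsCyclicallyReduced C) (hlen : C.length = 2 * l) :
    ∃ (i : ℕ → Fin v) (j : ℕ → Fin k),
      i l = i 0 ∧
      (∀ t < l, i t ∈ Bl (j t) ∧ i (t + 1) ∈ Bl (j t) ∧ i t ≠ i (t + 1) ∧
        j t ≠ j ((t + 1) % l)) ∧
      (chainWeight a i j l 0 : ZMod m) - 1 ∣ chainDefect S a i j l ∧
      ((∀ t < l, (∃ r, C.getVert (2 * t) = Sum.inl (i t, r)) ∧
          (∃ c, C.getVert (2 * t + 1) = Sum.inr (j t, c))) ∨
       (∀ t < l, (∃ c, C.getVert (2 * t) = Sum.inr (j t, c)) ∧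
          (∃ r, C.getVert (2 * t + 1) = Sum.inl (i ((t + 1) % l), r)))) := by
  obtain ⟨x, y, htour, hvert⟩ := hC.exists_isTannerTour hlen
  refine ⟨fun t => (x t).1, fun t => (y t).1, congrArg Prod.fst htour.check_periodic.eq,
    fun t _ => ⟨(apmTannerGraph_adj_inl_inr.1 (htour.adj t)).1,
      (apmTannerGraph_adj_inl_inr.1 (htour.adj_succ t)).1, htour.check_fst_ne_succ t, ?_⟩,
    htour.chainWeight_sub_one_dvd_chainDefect,
    hvert.imp (fun h t ht => ⟨⟨_, (h t ht).1⟩, ⟨_, (h t ht).2⟩⟩)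
      fun h t ht => ⟨⟨_, (h t ht).1⟩, ⟨(x (t + 1)).2, ?_⟩⟩⟩
  · simpa only [htour.variable_periodic.map_mod_nat] using htour.variable_fst_ne_succ t
  · simpa only [htour.check_periodic.map_mod_nat] using (h t ht).2

theorem every_apm_cycle_gives_chain
    (v k m l : ℕ) (hl : 0 < l)
    (Bl : Fin k → Finset (Fin v)) (S : Fin v → Fin k → ZMod m)
    (a : Fin v → Fin k → (ZMod m)ˣ)
    (u : TannerVertex v k m)
    (C : (apmTannerGraph v k m Bl S a).Walk u u)
    (hC : C.IsCycle) (hlen : C.length = 2 * l) :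
    ∃ (i : ℕ → Fin v) (j : ℕ → Fin k),
      -- `i l = i 0`
      i l = i 0 ∧
      -- chain conditions: for each `1 ≤ k ≤ l` (reindexed by `t = k−1 < l`),
      -- `{i_{k−1}, i_k} ⊆ B_{j_{k−1}}`, `i_{k−1} ≠ i_k`, `j_{k−1} ≠ j_{k mod l}`
      (∀ t < l, i t ∈ Bl (j t) ∧ i (t + 1) ∈ Bl (j t) ∧ i t ≠ i (t + 1) ∧
        j t ≠ j ((t + 1) % l)) ∧
      -- with `p_h = ∏_{k=h}^{l−1} a_{i_{k+1},j_k}·a_{i_k,j_k}⁻¹ (mod m)`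
      -- (so `p_l = 1`) and `Δ = Σ_{k=0}^{l−1} (p_k·s_{i_k,j_k} − p_{k+1}·s_{i_{k+1},j_k})`,
      -- either `p_0 = 1` and `Δ ≡ 0 (mod m)`, or `gcd(p_0 − 1, m) ∣ Δ`
      (let p : ℕ → (ZMod m)ˣ := fun h =>
        ∏ t ∈ Finset.Ico h l, a (i (t + 1)) (j t) * (a (i t) (j t))⁻¹
       let Δ : ZMod m := ∑ t ∈ Finset.range l,
        ((p t : ZMod m) * S (i t) (j t) - (p (t + 1) : ZMod m) * S (i (t + 1)) (j t))
       (p 0 = 1 ∧ Δ = 0) ∨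
        (Nat.gcd (((p 0 : ZMod m) - 1).val) m ∣ Δ.val)) ∧
      -- the chain records the blocks of `H` traversed by the cycle
      ((∀ t < l, (∃ r, C.getVert (2 * t) = Sum.inl (i t, r)) ∧
          (∃ c, C.getVert (2 * t + 1) = Sum.inr (j t, c))) ∨
       (∀ t < l, (∃ c, C.getVert (2 * t) = Sum.inr (j t, c)) ∧
          (∃ r, C.getVert (2 * t + 1) = Sum.inl (i ((t + 1) % l), r)))) := by
  obtain ⟨i, j, hclosed, hchain, hdvd, hblocks⟩ :=
    every_apm_cycle_gives_chain_general (isCyclicallyReduced_of_isCycle hC) hlen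
  exact ⟨i, j, hclosed, hchain, Or.inr (gcd_val_dvd_val_of_dvd hdvd), hblocks⟩
end

section
/- Let m be a positive integer and A ⊆ ℤ_m a nonempty subset. Then A = ⟨a⟩ for some a ∈ A if and only if p_m(A)·|A| = m. -/
/-! Statement 7: A = ⟨a⟩ for some a ∈ A iff p_m(A)·|A| = m. -/

/-- The shifted set `A + T = {a + T mod m : a ∈ A}` of a subset `A ⊆ ℤ_m`. -/
def shiftSet (m : ℕ) (A : Finset (ZMod m)) (T : ℕ) : Finset (ZMod m) :=
  A.image (fun x => x + (T : ZMod m))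

/-- The period `p_m(A)` of `A ⊆ ℤ_m`: the least positive integer `T` with
`A + T = A`. -/
noncomputable def periodOf (m : ℕ) (A : Finset (ZMod m)) : ℕ :=
  sInf {T : ℕ | 0 < T ∧ shiftSet m A T = A}

/-- The least positive integer `t` satisfying `t·p_m(A) ≡ 0 (mod m)`. -/
noncomputable def orbitLen (m : ℕ) (A : Finset (ZMod m)) : ℕ :=
  sInf {t : ℕ | 0 < t ∧ m ∣ t * periodOf m A}

/-- `⟨a⟩ = {a + i·p_m(A) mod m : 1 ≤ i ≤ t}`, with `t` the least positive
integer satisfying `t·p_m(A) ≡ 0 (mod m)`. -/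
noncomputable def orbitOf (m : ℕ) (A : Finset (ZMod m)) (a : ZMod m) : Finset (ZMod m) :=
  (Finset.Icc 1 (orbitLen m A)).image (fun i => a + ((i * periodOf m A : ℕ) : ZMod m))

/-!
Translation by `1` generates the action of `ℤ_m` on its subsets, and `p_m(A)` is the period of `A`
under it; hence `p := p_m(A)` divides the order `m` of `1`. The progression `⟨a⟩` runs once through
the coset of `a` modulo the subgroup generated by `p`, so it has `m / p` elements, and it stays in
`A` when `a ∈ A` because translation by `p` fixes `A`. Therefore `A = ⟨a⟩` exactly when
`|A| = m / p`.
-/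

theorem sInf_pos_multiples (d : ℕ) : sInf {t : ℕ | 0 < t ∧ d ∣ t} = d := by
  obtain rfl | hd := d.eq_zero_or_pos
  · have no_pos_multiple : {t : ℕ | 0 < t ∧ 0 ∣ t} = ∅ :=
      Set.eq_empty_of_forall_notMem fun t ht => ht.1.ne' (zero_dvd_iff.mp ht.2)
    rw [no_pos_multiple, Nat.sInf_empty]
  · have least : IsLeast {t : ℕ | 0 < t ∧ d ∣ t} d :=
      ⟨⟨hd, dvd_rfl⟩, fun t ht => Nat.le_of_dvd ht.1 ht.2⟩
    exact least.csInf_eq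

theorem mul_addOrderOf_natCast_of_dvd {m p : ℕ} (hm : m ≠ 0) (hp : p ∣ m) :
    p * addOrderOf (p : ZMod m) = m := by
  rw [ZMod.addOrderOf_coe p hm, Nat.gcd_eq_right hp, Nat.mul_div_cancel' hp]

section AddLeftCancelMonoid

variable {G : Type*} [AddLeftCancelMonoid G]

theorem injOn_nsmul_Ico_addOrderOf (x : G) (k : ℕ) :
    Set.InjOn (fun i : ℕ => i • x) (Set.Ico k (k + addOrderOf x)) := by
  intro i hi j hj hij
  have mod_eq : i % addOrderOf x = j % addOrderOf x := nsmul_eq_nsmul_iff_modEq.mp hij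
  exact Nat.mod_injOn_Ico k (addOrderOf x) (Finset.mem_coe.mpr (Finset.mem_Ico.mpr hi))
    (Finset.mem_coe.mpr (Finset.mem_Ico.mpr hj)) mod_eq

theorem card_image_add_nsmul_Icc_addOrderOf [DecidableEq G] (a x : G) :
    ((Finset.Icc 1 (addOrderOf x)).image fun i => a + i • x).card = addOrderOf x := by
  rw [Finset.card_image_of_injOn, Nat.card_Icc, Nat.add_sub_cancel]
  intro i hi j hj hij
  simp only [Finset.coe_Icc, Set.mem_Icc] at hi hj
  exact injOn_nsmul_Ico_addOrderOf x 1 ⟨hi.1, by lia⟩ ⟨hj.1, by lia⟩ (add_left_cancel hij)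

end AddLeftCancelMonoid

section Period

open scoped Pointwise

variable (m : ℕ) (A : Finset (ZMod m))

theorem shiftSet_eq_nsmul_one_vadd (T : ℕ) : shiftSet m A T = (T • (1 : ZMod m)) +ᵥ A := by
  simp only [shiftSet, nsmul_one, add_comm _ (T : ZMod m)]
  rfl

theorem shiftSet_eq_self_iff_period_dvd (T : ℕ) :
    shiftSet m A T = A ↔ AddAction.period (1 : ZMod m) A ∣ T := by
  rw [shiftSet_eq_nsmul_one_vadd, AddAction.nsmul_vadd_eq_iff_period_dvd]

theorem periodOf_eq_period : periodOf m A = AddAction.period (1 : ZMod m) A := by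
  simp only [periodOf, shiftSet_eq_self_iff_period_dvd, sInf_pos_multiples]

theorem shiftSet_eq_self_iff_periodOf_dvd (T : ℕ) : shiftSet m A T = A ↔ periodOf m A ∣ T := by
  rw [periodOf_eq_period, shiftSet_eq_self_iff_period_dvd]

theorem periodOf_dvd : periodOf m A ∣ m := by
  simpa only [periodOf_eq_period, ZMod.addOrderOf_one] using
    AddAction.period_dvd_addOrderOf (1 : ZMod m) A

end Period

section Orbit

variable (m : ℕ) (A : Finset (ZMod m))

theorem orbitLen_eq_addOrderOf : orbitLen m A = addOrderOf (periodOf m A : ZMod m) := by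
  have dvd_mul_iff (t : ℕ) :
      m ∣ t * periodOf m A ↔ addOrderOf (periodOf m A : ZMod m) ∣ t := by
    rw [addOrderOf_dvd_iff_nsmul_eq_zero, nsmul_eq_mul, ← Nat.cast_mul, ZMod.natCast_eq_zero_iff]
  simp only [orbitLen, dvd_mul_iff, sInf_pos_multiples]

theorem card_orbitOf (a : ZMod m) :
    (orbitOf m A a).card = addOrderOf (periodOf m A : ZMod m) := by
  simp only [orbitOf, orbitLen_eq_addOrderOf, Nat.cast_mul, ← nsmul_eq_mul,
    card_image_add_nsmul_Icc_addOrderOf]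

variable {m A}

theorem periodOf_mul_card_orbitOf (hm : m ≠ 0) (a : ZMod m) :
    periodOf m A * (orbitOf m A a).card = m := by
  rw [card_orbitOf, mul_addOrderOf_natCast_of_dvd hm (periodOf_dvd m A)]

theorem orbitOf_subset {a : ZMod m} (ha : a ∈ A) : orbitOf m A a ⊆ A := by
  refine Finset.image_subset_iff.mpr fun i _ => ?_
  have shift_eq : shiftSet m A (i * periodOf m A) = A :=
    (shiftSet_eq_self_iff_periodOf_dvd m A _).mpr (dvd_mul_left _ i)
  exact shift_eq.subset (Finset.mem_image_of_mem _ ha)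

theorem eq_orbitOf_iff_card_eq {a : ZMod m} (ha : a ∈ A) :
    A = orbitOf m A a ↔ A.card = (orbitOf m A a).card :=
  ⟨congrArg Finset.card, fun h => (Finset.eq_of_subset_of_card_le (orbitOf_subset ha) h.le).symm⟩

theorem eq_orbitOf_iff_periodOf_mul_card_eq (hm : m ≠ 0) {a : ZMod m} (ha : a ∈ A) :
    A = orbitOf m A a ↔ periodOf m A * A.card = m := by
  have periodOf_ne_zero : periodOf m A ≠ 0 := ne_zero_of_dvd_ne_zero hm (periodOf_dvd m A)
  calc A = orbitOf m A a
      ↔ A.card = (orbitOf m A a).card := eq_orbitOf_iff_card_eq ha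
    _ ↔ periodOf m A * A.card = periodOf m A * (orbitOf m A a).card :=
        (Nat.mul_right_inj periodOf_ne_zero).symm
    _ ↔ periodOf m A * A.card = m := by rw [periodOf_mul_card_orbitOf hm a]

end Orbit

theorem eq_orbit_iff (m : ℕ) (hm : 0 < m) (A : Finset (ZMod m))
    (hA : A.Nonempty) :
    (∃ a ∈ A, A = orbitOf m A a) ↔ periodOf m A * A.card = m := by
  constructor
  · rintro ⟨a, ha, A_eq⟩
    exact (eq_orbitOf_iff_periodOf_mul_card_eq hm.ne' ha).mp A_eq
  · intro card_eq
    obtain ⟨a, ha⟩ := hA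
    exact ⟨a, ha, (eq_orbitOf_iff_periodOf_mul_card_eq hm.ne' ha).mpr card_eq⟩
end

section
/- Suppose m is a prime number with m ≥ l. Then every allowable 2l-cycle chain L for H_{m,𝓑,S} satisfies n(L) < m and corresponds to exactly r(L) = m distinct 2l-cycles in TG(H_{m,𝓑,S}); consequently, the number of cycles of length 2l in the Tanner graph of the QC-LDPC code with CPM-size m equals m times the number of pairwise non-isomorphic allowable 2l-cycle chains in the base matrix. (In general, when m is prime, r(L) = 1 or r(L) = m.) -/
/-- The Tanner graph of `H_{m,𝓑,S}`: check node `(i, r)` is adjacent to variable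
node `(j, c)` iff `i ∈ B_j` and `r = c + s_{i,j}`. -/
def qcTannerGraph (v k m : ℕ) (Bl : Fin k → Finset (Fin v))
    (S : Fin v → Fin k → ZMod m) : SimpleGraph (TannerVertex v k m) :=
  SimpleGraph.fromRel (fun x y =>
    ∃ (i : Fin v) (r : ZMod m) (j : Fin k) (c : ZMod m),
      x = Sum.inl (i, r) ∧ y = Sum.inr (j, c) ∧ i ∈ Bl j ∧ r = c + S i j)

/-- Row index (within its row-block) of the `t`-th check node of the closed walk
traced by the chain `(i_0,j_0,i_1,j_1,…)` in `H_{m,𝓑,S}`, starting from the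
1-entry with row index `r` in block `(i_0,j_0)`. -/
def qcRow (v k m : ℕ) (S : Fin v → Fin k → ZMod m)
    (i : ℕ → Fin v) (j : ℕ → Fin k) (r : ZMod m) : ℕ → ZMod m
  | 0 => r
  | t + 1 => (qcRow v k m S i j r t - S (i t) (j t)) + S (i (t + 1)) (j t)

/-- Column index (within its column-block) of the `t`-th variable node of the
closed walk traced by the chain in `H_{m,𝓑,S}` starting from row index `r` in
block `(i_0,j_0)`. -/
def qcCol (v k m : ℕ) (S : Fin v → Fin k → ZMod m)
    (i : ℕ → Fin v) (j : ℕ → Fin k) (r : ZMod m) (t : ℕ) : ZMod m :=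
  qcRow v k m S i j r t - S (i t) (j t)

/-- `L = (i_0,j_0,…,i_{l−1},j_{l−1})` is a 2l-cycle chain for `H_{m,𝓑,S}`:
`i_l = i_0`, for each `0 ≤ t ≤ l−1` we have `{i_t, i_{t+1}} ⊆ B_{j_t}`,
`i_t ≠ i_{t+1}`, `j_t ≠ j_{(t+1) mod l}`, and
`Σ_{t=0}^{l−1} (s_{i_t,j_t} − s_{i_{t+1},j_t}) ≡ 0 (mod m)`. -/
def IsQcCycleChain (v k m l : ℕ) (Bl : Fin k → Finset (Fin v))
    (S : Fin v → Fin k → ZMod m) (i : ℕ → Fin v) (j : ℕ → Fin k) : Prop :=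
  i l = i 0 ∧
  (∀ t < l, i t ∈ Bl (j t) ∧ i (t + 1) ∈ Bl (j t) ∧ i t ≠ i (t + 1) ∧
    j t ≠ j ((t + 1) % l)) ∧
  (∑ t ∈ Finset.range l, (S (i t) (j t) - S (i (t + 1)) (j t))) = 0

/-- A chain is allowable if for every starting row `r ∈ ℤ_m` the traced closed
walk of length `2l` is a cycle, i.e. its `2l` vertices — the check nodes
`(i_t, row_t)` and variable nodes `(j_t, col_t)`, `0 ≤ t ≤ l−1` — are pairwise
distinct. -/
def QcAllowable (v k m l : ℕ) (S : Fin v → Fin k → ZMod m)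
    (i : ℕ → Fin v) (j : ℕ → Fin k) : Prop :=
  ∀ r : ZMod m, ∀ p q, p < l → q < l → p ≠ q →
    (i p, qcRow v k m S i j r p) ≠ (i q, qcRow v k m S i j r q) ∧
    (j p, qcCol v k m S i j r p) ≠ (j q, qcCol v k m S i j r q)

/-- The set of integers `e`, `1 ≤ e ≤ l−1`, such that shifting the chain by `e`
positions (indices mod `l`) leaves it unchanged:
`(i_{(e+p) mod l}, j_{(e+p) mod l}) = (i_p, j_p)` for all `0 ≤ p ≤ l−1`. -/
def chainPeriods (v k l : ℕ) (i : ℕ → Fin v) (j : ℕ → Fin k) : Set ℕ :=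
  {e | 1 ≤ e ∧ e ≤ l - 1 ∧
    ∀ p < l, (i ((e + p) % l), j ((e + p) % l)) = (i p, j p)}

/-- The least `e` as above (meaningful only when `chainPeriods` is nonempty). -/
noncomputable def chainE (v k l : ℕ) (i : ℕ → Fin v) (j : ℕ → Fin k) : ℕ :=
  sInf (chainPeriods v k l i j)

open scoped Classical in
/-- `n(L) = l / e` if such an `e` exists, and `n(L) = 1` otherwise. -/
noncomputable def chainN (v k l : ℕ) (i : ℕ → Fin v) (j : ℕ → Fin k) : ℕ :=
  if (chainPeriods v k l i j).Nonempty then l / chainE v k l i j else 1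

open scoped Classical in
/-- `I(L) = {(i_t,j_t), (i_{t+1},j_t) : 0 ≤ t ≤ e−1}` if such an `e` exists,
and `I(L) = ∅` otherwise. -/
noncomputable def chainI (v k l : ℕ) (i : ℕ → Fin v) (j : ℕ → Fin k) :
    Set (Fin v × Fin k) :=
  if (chainPeriods v k l i j).Nonempty then
    {x | ∃ t < chainE v k l i j, x = (i t, j t) ∨ x = (i ((t + 1) % l), j t)}
  else ∅

/-- `A(b)` for a block index `b = (i,j)`: the set of all values
`Σ_{x=0}^{t} (s_{i_x,j_x} − s_{i_{x+1},j_x}) mod m` over those `0 ≤ t ≤ l−1` at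
which the chain passes through block `b`, i.e. `(i_t,j_t) = b` or
`(i_{t+1},j_t) = b` (indices mod `l`). -/
def chainA (v k m l : ℕ) (S : Fin v → Fin k → ZMod m)
    (i : ℕ → Fin v) (j : ℕ → Fin k) (b : Fin v × Fin k) : Finset (ZMod m) :=
  ((Finset.range l).filter
      (fun t => (i t, j t) = b ∨ (i ((t + 1) % l), j t) = b)).image
    (fun t => ∑ x ∈ Finset.range (t + 1),
      (S (i x) (j x) - S (i ((x + 1) % l)) (j x)))

/-- The vertex set of the closed walk of length `2l` traced by the chain in the
Tanner graph of `H_{m,𝓑,S}`, starting from the 1-entry with row index `r` in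
block `(i_0,j_0)`. -/
def qcWalkVerts (v k m l : ℕ) (S : Fin v → Fin k → ZMod m)
    (i : ℕ → Fin v) (j : ℕ → Fin k) (r : ZMod m) :
    Finset (TannerVertex v k m) :=
  ((Finset.range l).image fun t => Sum.inl (i t, qcRow v k m S i j r t)) ∪
  ((Finset.range l).image fun t => Sum.inr (j t, qcCol v k m S i j r t))

/-- Two 2l-cycle chains are isomorphic iff one is obtained from the other by a
cyclic shift through an even number of positions (a shift by `t` of the index
`0 ≤ p ≤ l−1` corresponds to a shift by `2t` positions of the chain), possibly
after reversal. -/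
def ChainIso (v k l : ℕ) (c c' : (ℕ → Fin v) × (ℕ → Fin k)) : Prop :=
  ∃ t : ℕ,
    (∀ p < l, c'.1 p = c.1 ((p + t) % l) ∧ c'.2 p = c.2 ((p + t) % l)) ∨
    (∀ p < l, c'.1 p = c.1 ((t + (l - p)) % l) ∧
      c'.2 p = c.2 ((t + (l - p) + (l - 1)) % l))

/-!
The group `ℤ_m` acts on the closed walks traced by a chain, and each fibre of `r ↦` (vertex set of
the walk started at row `r`) is a coset of the stabiliser; hence `r(L)` divides `m`. A row shift in
the stabiliser carries the node over `i₀` to another node of the walk over `i₀`, and at most `l - 1`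
of the `l` check nodes lie over `i₀` because `i₁ ≠ i₀`. So if every prime factor of `m` is at least
`l`, the stabiliser is trivial and `r(L) = m`.

For the count, a rooted and oriented `2l`-cycle of the Tanner graph starting at a check node is
determined by the chain below it and by its starting row, which gives `m` such cycles for each
allowable chain, read as a sequence indexed by `ℤ_l`. The dihedral group of order `2l` acts on these
chains with the isomorphism classes as orbits. The action is free: a reflection fixing a chain would
force `i_t = i_{t+1}` or `j_t = j_{t+1}`, and a rotation fixing it acts on each cycle above it as a
row shift that preserves the vertex set, hence as the identity.
-/

theorem card_image_mul_card_fiber {A β : Type*} [AddGroup A] [Fintype A] [DecidableEq β]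
    {f : A → β} (hf : ∀ r r' d, f r = f r' → f (r + d) = f (r' + d)) (r₀ : A) :
    (Finset.univ.image f).card * (Finset.univ.filter (f · = f r₀)).card = Fintype.card A := by
  have card_fiber (r : A) : (Finset.univ.filter (f · = f r)).card =
      (Finset.univ.filter (f · = f r₀)).card := by
    refine Finset.card_equiv (Equiv.addRight (-r + r₀)) fun r' => ?_
    simp only [Finset.mem_filter, Finset.mem_univ, true_and, Equiv.coe_addRight]
    exact ⟨fun h => by simpa using hf _ _ (-r + r₀) h,
      fun h => by simpa [add_assoc] using hf _ _ (-r₀ + r) h⟩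
  rw [← Finset.card_univ, Finset.card_eq_sum_card_image f Finset.univ, Finset.sum_const_nat]
  simpa using card_fiber

theorem ncard_eq_card_mul_ncard_of_existsUnique_mem_orbit {G X ι : Type*} [Group G]
    [MulAction G X] {A : Set X} {R : Set ι} {f : ι → X}
    (hsmul : ∀ g : G, ∀ x ∈ A, g • x ∈ A) (hfree : ∀ x ∈ A, ∀ g : G, g • x = x → g = 1)
    (hfR : ∀ c ∈ R, f c ∈ A) (hR : ∀ x ∈ A, ∃! c, c ∈ R ∧ f c ∈ MulAction.orbit G x) :
    A.ncard = Nat.card G * R.ncard := by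
  have hbij : Set.BijOn (fun p : G × ι => p.1 • f p.2) (Set.univ ×ˢ R) A := by
    refine ⟨fun p hp => hsmul _ _ (hfR _ hp.2), ?_, fun x hx => ?_⟩
    · rintro ⟨g, c⟩ ⟨-, hc⟩ ⟨g', c'⟩ ⟨-, hc'⟩ (h : g • f c = g' • f c')
      obtain rfl : c = c' := (hR _ (hsmul g _ (hfR c hc))).unique
        ⟨hc, g⁻¹, inv_smul_smul g _⟩ ⟨hc', g'⁻¹, by simp only [h, inv_smul_smul]⟩
      have hone := hfree _ (hfR c hc) (g'⁻¹ * g) (by rw [mul_smul, h, inv_smul_smul])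
      rw [inv_mul_eq_one.1 hone]
    · obtain ⟨c, ⟨hc, g, hg⟩, -⟩ := hR x hx
      exact ⟨(g⁻¹, c), ⟨trivial, hc⟩, by simp only [← hg, inv_smul_smul]⟩
  rw [← hbij.ncard_eq, Set.ncard_prod, Set.ncard_univ]

section CyclicTraversal

variable {V : Type*} {G : SimpleGraph V} {n : ℕ} {f : ℕ → V}

/-- `f` runs around an `n`-cycle of `G` forever: it encodes a cycle together with a starting vertex
and a direction. The first field makes `f` both `n`-periodic and injective on each period. -/
structure IsCyclicTraversal (G : SimpleGraph V) (n : ℕ) (f : ℕ → V) : Prop where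
  eq_iff_modEq : ∀ x y, f x = f y ↔ x ≡ y [MOD n]
  adj_succ : ∀ x, G.Adj (f x) (f (x + 1))

theorem IsCyclicTraversal.shift (hf : IsCyclicTraversal G n f) (s : ℕ) :
    IsCyclicTraversal G n fun x => f (x + s) where
  eq_iff_modEq x y := (hf.eq_iff_modEq _ _).trans
    ⟨Nat.ModEq.add_right_cancel' s, Nat.ModEq.add_right s⟩
  adj_succ x := by
    rw [add_right_comm]
    exact hf.adj_succ (x + s)

theorem IsCyclicTraversal.apply_add_self (hf : IsCyclicTraversal G n f) (x : ℕ) :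
    f (x + n) = f x :=
  (hf.eq_iff_modEq _ _).2 (Nat.add_modEq_right)

theorem exists_walk_getVert_eq (hadj : ∀ x, G.Adj (f x) (f (x + 1))) (n : ℕ) :
    ∃ p : G.Walk (f 0) (f n), p.length = n ∧ ∀ x ≤ n, p.getVert x = f x := by
  induction n generalizing f with
  | zero => exact ⟨.nil, rfl, fun x hx => by rw [Nat.le_zero.1 hx]; rfl⟩
  | succ n ih =>
    obtain ⟨p, hlen, hvert⟩ := ih (f := fun x => f (x + 1)) fun x => hadj (x + 1)
    refine ⟨.cons (hadj 0) p, by rw [SimpleGraph.Walk.length_cons, hlen], fun x hx => ?_⟩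
    cases x with
    | zero => rfl
    | succ x => exact hvert x (by omega)

theorem IsCyclicTraversal.exists_isCycle (hf : IsCyclicTraversal G n f) (hn : 3 ≤ n) :
    ∃ p : G.Walk (f 0) (f 0), p.IsCycle ∧ p.length = n ∧ ∀ x ≤ n, p.getVert x = f x := by
  obtain ⟨p, hlen, hvert⟩ := exists_walk_getVert_eq hf.adj_succ n
  have hclosed : f n = f 0 := by simpa using hf.apply_add_self 0
  refine ⟨p.copy rfl hclosed, ?_, by simpa using hlen, by simpa using hvert⟩
  rw [SimpleGraph.Walk.isCycle_iff_isPath_tail_and_le_length, SimpleGraph.Walk.length_copy, hlen,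
    ← SimpleGraph.Walk.IsPath.getVert_injOn_iff]
  refine ⟨fun x hx y hy hxy => ?_, hn⟩
  simp only [SimpleGraph.Walk.length_tail, SimpleGraph.Walk.length_copy, hlen,
    Set.mem_ofPred_eq] at hx hy
  simp only [SimpleGraph.Walk.getVert_tail, SimpleGraph.Walk.getVert_copy] at hxy
  rw [hvert _ (by omega), hvert _ (by omega), hf.eq_iff_modEq] at hxy
  exact (Nat.ModEq.add_right_cancel' 1 hxy).eq_of_lt_of_lt (by omega) (by omega)

theorem isCyclicTraversal_getVert {u : V} {p : G.Walk u u} (hp : p.IsCycle) :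
    IsCyclicTraversal G p.length fun x => p.getVert (x % p.length) := by
  have hlen := hp.three_le_length
  have hmod (x : ℕ) : x % p.length < p.length := Nat.mod_lt _ (by omega)
  refine ⟨fun x y => ⟨fun h => ?_, fun h => congrArg p.getVert h⟩, fun x => ?_⟩
  · have hx := hmod x
    have hy := hmod y
    exact hp.getVert_injOn' (by simp; omega) (by simp; omega) h
  · have hsucc : p.getVert ((x + 1) % p.length) = p.getVert (x % p.length + 1) := by
      rw [← Nat.mod_add_mod]
      rcases (Nat.add_one_le_of_lt (hmod x)).lt_or_eq with h | h
      · rw [Nat.mod_eq_of_lt h]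
      · rw [h, Nat.mod_self, p.getVert_zero, p.getVert_length]
    rw [hsucc]
    exact p.adj_getVert_succ (hmod x)

theorem ncard_isCycle_eq_ncard_isCyclicTraversal (hn : 3 ≤ n) :
    Set.ncard {p : (u : V) × G.Walk u u | p.2.IsCycle ∧ p.2.length = n} =
      Set.ncard {f | IsCyclicTraversal G n f} := by
  refine Set.BijOn.ncard_eq (f := fun p x => p.2.getVert (x % n)) ⟨?_, ?_, ?_⟩
  · rintro ⟨u, p⟩ ⟨hp, rfl⟩
    exact isCyclicTraversal_getVert hp
  · rintro ⟨u, p⟩ ⟨-, hlen⟩ ⟨w, q⟩ ⟨-, hlen'⟩ heq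
    have hvert (x : ℕ) (hx : x < n) : p.getVert x = q.getVert x := by
      simpa only [Nat.mod_eq_of_lt hx] using congrFun heq x
    obtain rfl : u = w := by simpa using hvert 0 (by omega)
    congr 1
    refine SimpleGraph.Walk.ext_getVert_le_length (hlen.trans hlen'.symm) fun x hx => ?_
    rcases hx.lt_or_eq with hx | rfl
    · exact hvert x (hlen ▸ hx)
    · rw [p.getVert_length, hlen.trans hlen'.symm, q.getVert_length]
  · intro f hf
    obtain ⟨p, hp, hlen, hvert⟩ := IsCyclicTraversal.exists_isCycle hf hn
    refine ⟨⟨f 0, p⟩, ⟨hp, hlen⟩, funext fun x => ?_⟩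
    exact (hvert _ (Nat.mod_lt _ (by omega)).le).trans
      ((hf.eq_iff_modEq _ _).2 (Nat.mod_modEq x n))

end CyclicTraversal

/-- A cyclic sequence `(a₀, b₀, a₁, b₁, …, a_{l-1}, b_{l-1})` alternating between two types. It
encodes both cycle chains (over block indices) and rooted cycles of the Tanner graph (over nodes);
indexing by `ZMod l` builds in the convention that indices are read modulo `l`. -/
@[ext]
structure AlternatingSeq (α β : Type*) (l : ℕ) where
  left : ZMod l → α
  right : ZMod l → β

namespace AlternatingSeq

section Cycles

variable {α β : Type*} {E : α → β → Prop} {G : SimpleGraph (α ⊕ β)} {l : ℕ}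

/-- The sequence is a cycle of the bipartite graph with edge relation `E`, rooted at `a₀` and
oriented towards `b₀`. For `l = 1` this degenerates to a single edge. -/
structure IsCycle (E : α → β → Prop) (d : AlternatingSeq α β l) : Prop where
  left_injective : Function.Injective d.left
  right_injective : Function.Injective d.right
  rel : ∀ t, E (d.left t) (d.right t)
  rel_succ : ∀ t, E (d.left (t + 1)) (d.right t)

/-- The sequence read as a single `2l`-periodic sequence `a₀, b₀, a₁, b₁, …`. -/
def interleave (d : AlternatingSeq α β l) (x : ℕ) : α ⊕ β :=
  if Even x then .inl (d.left (x / 2 : ℕ)) else .inr (d.right (x / 2 : ℕ))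

theorem interleave_two_mul (d : AlternatingSeq α β l) (x : ℕ) :
    d.interleave (2 * x) = .inl (d.left x) := by
  simp [interleave]

theorem interleave_two_mul_add_one (d : AlternatingSeq α β l) (x : ℕ) :
    d.interleave (2 * x + 1) = .inr (d.right x) := by
  have hdiv : (2 * x + 1) / 2 = x := by omega
  simp [interleave, hdiv]

theorem interleave_injective [NeZero l] :
    Function.Injective (interleave : AlternatingSeq α β l → ℕ → α ⊕ β) := by
  refine fun d d' h => AlternatingSeq.ext (funext fun t => ?_) (funext fun t => ?_)
  · simpa [interleave_two_mul] using congrFun h (2 * t.val)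
  · simpa [interleave_two_mul_add_one] using congrFun h (2 * t.val + 1)

theorem IsCycle.interleave_eq_iff_modEq {d : AlternatingSeq α β l} (hd : d.IsCycle E) (x y : ℕ) :
    d.interleave x = d.interleave y ↔ x ≡ y [MOD 2 * l] := by
  have not_modEq (a b : ℕ) : ¬ 2 * a ≡ 2 * b + 1 [MOD 2 * l] := fun h => by
    have := h.of_mul_right l
    unfold Nat.ModEq at this
    omega
  have modEq_iff (a b : ℕ) : (a : ZMod l) = b ↔ 2 * a ≡ 2 * b [MOD 2 * l] := by
    rw [ZMod.natCast_eq_natCast_iff, Nat.ModEq.mul_left_cancel_iff' two_ne_zero]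
  obtain ⟨a, rfl | rfl⟩ := x.even_or_odd' <;> obtain ⟨b, rfl | rfl⟩ := y.even_or_odd'
  · simp only [interleave_two_mul, Sum.inl.injEq, hd.left_injective.eq_iff, modEq_iff]
  · simpa only [interleave_two_mul, interleave_two_mul_add_one, reduceCtorEq, false_iff]
      using not_modEq a b
  · simpa only [interleave_two_mul, interleave_two_mul_add_one, reduceCtorEq, false_iff]
      using fun h => not_modEq b a h.symm
  · simp only [interleave_two_mul_add_one, Sum.inr.injEq, hd.right_injective.eq_iff, modEq_iff]
    exact ⟨Nat.ModEq.add_right 1, Nat.ModEq.add_right_cancel' 1⟩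

theorem isCyclicTraversal_interleave_iff [NeZero l] {d : AlternatingSeq α β l} :
    IsCyclicTraversal G (2 * l) d.interleave ↔
      d.IsCycle fun a b => G.Adj (.inl a) (.inr b) := by
  refine ⟨fun h => ⟨fun s t hst => ?_, fun s t hst => ?_, fun t => ?_, fun t => ?_⟩,
    fun hd => ⟨hd.interleave_eq_iff_modEq, fun x => ?_⟩⟩
  · have hmod := (h.eq_iff_modEq (2 * s.val) (2 * t.val)).1 (by simp [interleave_two_mul, hst])
    simpa using (ZMod.natCast_eq_natCast_iff _ _ l).2
      (Nat.ModEq.mul_left_cancel' two_ne_zero hmod)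
  · have hmod := (h.eq_iff_modEq (2 * s.val + 1) (2 * t.val + 1)).1
      (by simp [interleave_two_mul_add_one, hst])
    simpa using (ZMod.natCast_eq_natCast_iff _ _ l).2
      (Nat.ModEq.mul_left_cancel' two_ne_zero (Nat.ModEq.add_right_cancel' 1 hmod))
  · simpa [interleave_two_mul, interleave_two_mul_add_one] using h.adj_succ (2 * t.val)
  · have hadj := h.adj_succ (2 * t.val + 1)
    rw [interleave_two_mul_add_one, add_assoc, ← mul_add_one 2, interleave_two_mul] at hadj
    simpa using hadj.symm
  · obtain ⟨y, rfl | rfl⟩ := x.even_or_odd'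
    · rw [interleave_two_mul, interleave_two_mul_add_one]
      exact hd.rel y
    · rw [interleave_two_mul_add_one, add_assoc, ← mul_add_one 2, interleave_two_mul]
      simpa using (hd.rel_succ y).symm

end Cycles

end AlternatingSeq

section BipartiteTraversal

variable {α β : Type*} {G : SimpleGraph (α ⊕ β)} {l n : ℕ} {f : ℕ → α ⊕ β}

theorem isLeft_eq_not_isLeft_of_adj
    (hG : G.IsBipartiteWith (Set.range Sum.inl) (Set.range Sum.inr)) {x y : α ⊕ β}
    (h : G.Adj x y) : y.isLeft = !x.isLeft := by
  rcases hG.mem_of_adj h with ⟨⟨a, rfl⟩, ⟨b, rfl⟩⟩ | ⟨⟨a, rfl⟩, ⟨b, rfl⟩⟩ <;> rfl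

theorem IsCyclicTraversal.isLeft_apply
    (hG : G.IsBipartiteWith (Set.range Sum.inl) (Set.range Sum.inr))
    (hf : IsCyclicTraversal G n f) (h0 : (f 0).isLeft) (x : ℕ) :
    (f x).isLeft = decide (Even x) := by
  induction x with
  | zero => simpa using h0
  | succ x ih =>
    rw [isLeft_eq_not_isLeft_of_adj hG (hf.adj_succ x), ih, ← decide_not]
    exact decide_eq_decide.2 Nat.even_add_one.symm

theorem IsCyclicTraversal.exists_interleave_eq [NeZero l]
    (hG : G.IsBipartiteWith (Set.range Sum.inl) (Set.range Sum.inr))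
    (hf : IsCyclicTraversal G (2 * l) f) (h0 : (f 0).isLeft) :
    ∃ d : AlternatingSeq α β l, d.interleave = f := by
  have hleft (x : ℕ) : ∃ a, f (2 * x) = .inl a :=
    Sum.isLeft_iff.1 (by simp [hf.isLeft_apply hG h0])
  have hright (x : ℕ) : ∃ b, f (2 * x + 1) = .inr b :=
    Sum.isRight_iff.1 (Sum.isLeft_eq_false.1 (by simp [hf.isLeft_apply hG h0]))
  choose a ha using hleft
  choose b hb using hright
  have hmod (y : ℕ) : 2 * (y % l) ≡ 2 * y [MOD 2 * l] := (Nat.mod_modEq y l).mul_left' 2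
  refine ⟨⟨fun t => a t.val, fun t => b t.val⟩, funext fun x => ?_⟩
  obtain ⟨y, rfl | rfl⟩ := x.even_or_odd'
  · simp only [AlternatingSeq.interleave_two_mul, ZMod.val_natCast, ← ha, hf.eq_iff_modEq]
    exact hmod y
  · simp only [AlternatingSeq.interleave_two_mul_add_one, ZMod.val_natCast, ← hb, hf.eq_iff_modEq]
    exact (hmod y).add_right 1

theorem bijOn_shift_isCyclicTraversal [NeZero n]
    (hG : G.IsBipartiteWith (Set.range Sum.inl) (Set.range Sum.inr)) :
    Set.BijOn (fun f x => f (x + 1)) {f | IsCyclicTraversal G n f ∧ ¬ (f 0).isLeft}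
      {f | IsCyclicTraversal G n f ∧ (f 0).isLeft} := by
  have hn : 1 ≤ n := NeZero.one_le
  refine ⟨fun f ⟨hf, h0⟩ => ⟨hf.shift 1, ?_⟩, fun f ⟨hf, _⟩ g ⟨hg, _⟩ hfg => funext fun x => ?_,
    fun f ⟨hf, h0⟩ => ⟨fun x => f (x + (n - 1)), ⟨hf.shift _, ?_⟩, funext fun x => ?_⟩⟩
  · simpa [isLeft_eq_not_isLeft_of_adj hG (hf.adj_succ 0)] using h0
  · have hlast := congrFun hfg (x + (n - 1))
    simp only [add_assoc, Nat.sub_add_cancel hn] at hlast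
    rwa [hf.apply_add_self, hg.apply_add_self] at hlast
  · have hadj := hf.adj_succ (n - 1)
    have hclosed := hf.apply_add_self 0
    rw [zero_add] at hclosed
    rw [Nat.sub_add_cancel hn, hclosed] at hadj
    simpa [isLeft_eq_not_isLeft_of_adj hG hadj.symm] using h0
  · simp only [add_assoc, Nat.add_sub_cancel' hn]
    exact hf.apply_add_self x

theorem ncard_isCyclicTraversal_eq_two_mul [NeZero n]
    (hG : G.IsBipartiteWith (Set.range Sum.inl) (Set.range Sum.inr)) :
    {f | IsCyclicTraversal G n f}.ncard =
      2 * {f | IsCyclicTraversal G n f ∧ (f 0).isLeft}.ncard := by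
  have hshift := bijOn_shift_isCyclicTraversal (n := n) hG
  have hunion : {f | IsCyclicTraversal G n f} =
      {f | IsCyclicTraversal G n f ∧ (f 0).isLeft} ∪
        {f | IsCyclicTraversal G n f ∧ ¬ (f 0).isLeft} := by
    ext f
    simp only [Set.mem_union, Set.mem_ofPred_eq]
    tauto
  have hdisj : Disjoint {f | IsCyclicTraversal G n f ∧ (f 0).isLeft}
      {f | IsCyclicTraversal G n f ∧ ¬ (f 0).isLeft} :=
    Set.disjoint_left.2 fun f hf hf' => hf'.2 hf.2
  have hencard : {f | IsCyclicTraversal G n f}.encard =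
      2 * {f | IsCyclicTraversal G n f ∧ (f 0).isLeft}.encard := by
    rw [hunion, Set.encard_union_eq hdisj, two_mul, ← hshift.injOn.encard_image,
      hshift.image_eq]
  rw [Set.ncard, hencard, ENat.toNat_mul, ENat.toNat_ofNat, Set.ncard]

theorem ncard_isCycle_two_mul_eq (hl : 2 ≤ l)
    (hG : G.IsBipartiteWith (Set.range Sum.inl) (Set.range Sum.inr)) :
    Set.ncard {p : (u : α ⊕ β) × G.Walk u u | p.2.IsCycle ∧ p.2.length = 2 * l} =
      2 * {d : AlternatingSeq α β l | d.IsCycle fun a b => G.Adj (.inl a) (.inr b)}.ncard := by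
  have : NeZero l := ⟨by omega⟩
  have hbij : Set.BijOn AlternatingSeq.interleave
      {d : AlternatingSeq α β l | d.IsCycle fun a b => G.Adj (.inl a) (.inr b)}
      {f | IsCyclicTraversal G (2 * l) f ∧ (f 0).isLeft} := by
    refine ⟨fun d hd => ⟨AlternatingSeq.isCyclicTraversal_interleave_iff.2 hd, by
      simp [AlternatingSeq.interleave]⟩, AlternatingSeq.interleave_injective.injOn,
      fun f ⟨hf, h0⟩ => ?_⟩
    obtain ⟨d, rfl⟩ := hf.exists_interleave_eq hG h0
    exact ⟨d, AlternatingSeq.isCyclicTraversal_interleave_iff.1 hf, rfl⟩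
  rw [ncard_isCycle_eq_ncard_isCyclicTraversal (by omega),
    ncard_isCyclicTraversal_eq_two_mul hG, hbij.ncard_eq]

end BipartiteTraversal

namespace AlternatingSeq

section Dihedral

variable {α β α' β' : Type*} {E : α → β → Prop} {l : ℕ}

/-- Rerooting and reversing a cyclic sequence: `r s` moves the starting point by `s` and `sr s`
also reverses. Reading `a₀, b₀, a₁, …` backwards from `a_s` meets `b_{s-1}` first, whence the extra
`- 1` in the right components. -/
instance : MulAction (DihedralGroup l) (AlternatingSeq α β l) where
  smul g d := match g with
    | .r s => ⟨fun t => d.left (t + s), fun t => d.right (t + s)⟩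
    | .sr s => ⟨fun t => d.left (s - t), fun t => d.right (s - t - 1)⟩
  one_smul d := by
    refine AlternatingSeq.ext (funext fun t => congrArg d.left ?_)
      (funext fun t => congrArg d.right ?_) <;> exact add_zero t
  mul_smul g h d := by
    rcases g with s | s <;> rcases h with u | u <;>
      refine AlternatingSeq.ext (funext fun t => congrArg d.left ?_)
        (funext fun t => congrArg d.right ?_) <;> ring

theorem r_smul (s : ZMod l) (d : AlternatingSeq α β l) : DihedralGroup.r s • d =
    ⟨fun t => d.left (t + s), fun t => d.right (t + s)⟩ := rfl

theorem sr_smul (s : ZMod l) (d : AlternatingSeq α β l) : DihedralGroup.sr s • d =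
    ⟨fun t => d.left (s - t), fun t => d.right (s - t - 1)⟩ := rfl

theorem IsCycle.smul {d : AlternatingSeq α β l} (hd : d.IsCycle E) (g : DihedralGroup l) :
    (g • d).IsCycle E := by
  rcases g with s | s
  · refine ⟨hd.left_injective.comp (add_left_injective s),
      hd.right_injective.comp (add_left_injective s), fun t => hd.rel (t + s), fun t => ?_⟩
    simpa only [r_smul, add_right_comm] using hd.rel_succ (t + s)
  · refine ⟨hd.left_injective.comp sub_right_injective, hd.right_injective.comp
      ((sub_left_injective (b := 1)).comp sub_right_injective), fun t => ?_, fun t => ?_⟩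
    · simpa only [sr_smul, sub_add_cancel] using hd.rel_succ (s - t - 1)
    · simpa only [sr_smul, sub_sub] using hd.rel (s - t - 1)

theorem sr_smul_ne_self {d : AlternatingSeq α β l} (hleft : ∀ t, d.left t ≠ d.left (t + 1))
    (hright : ∀ t, d.right t ≠ d.right (t + 1)) (s : ZMod l) : DihedralGroup.sr s • d ≠ d := by
  intro h
  obtain ⟨n, rfl⟩ := ZMod.intCast_surjective s
  obtain ⟨y, rfl | rfl⟩ := n.even_or_odd'
  · refine hright ((y : ZMod l) - 1) ?_
    have hfix := congrFun (congrArg right h) (y - 1 + 1)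
    rw [← hfix, sr_smul]
    exact congrArg d.right (by push_cast; ring)
  · refine hleft y ?_
    have hfix := congrFun (congrArg left h) (y + 1)
    rw [← hfix, sr_smul]
    exact congrArg d.left (by push_cast; ring)

/-- Applies one function to the left and another to the right components of the sequence. -/
def map (f : α → α') (g : β → β') (d : AlternatingSeq α β l) : AlternatingSeq α' β' l where
  left t := f (d.left t)
  right t := g (d.right t)

theorem map_smul (f : α → α') (g : β → β') (s : DihedralGroup l) (d : AlternatingSeq α β l) :
    (s • d).map f g = s • d.map f g := by
  cases s <;> rfl

section Verts

variable [NeZero l] [DecidableEq α] [DecidableEq β] [DecidableEq α'] [DecidableEq β']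

/-- The set of vertices visited by the sequence. -/
def verts (d : AlternatingSeq α β l) : Finset (α ⊕ β) :=
  (Finset.univ.image fun t => .inl (d.left t)) ∪ Finset.univ.image fun t => .inr (d.right t)

theorem inl_mem_verts {d : AlternatingSeq α β l} {a : α} :
    .inl a ∈ d.verts ↔ a ∈ Set.range d.left := by
  simp [verts]

theorem inr_mem_verts {d : AlternatingSeq α β l} {b : β} :
    .inr b ∈ d.verts ↔ b ∈ Set.range d.right := by
  simp [verts]

theorem verts_map (f : α → α') (g : β → β') (d : AlternatingSeq α β l) :
    (d.map f g).verts = d.verts.image (Sum.map f g) := by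
  simp only [verts, Finset.image_union, Finset.image_image]
  rfl

theorem verts_smul (g : DihedralGroup l) (d : AlternatingSeq α β l) :
    (g • d).verts = d.verts := by
  ext (a | b)
  · rw [inl_mem_verts, inl_mem_verts]
    rcases g with s | s
    · exact Set.ext_iff.1 ((Equiv.addRight s).surjective.range_comp d.left) a
    · exact Set.ext_iff.1 ((Equiv.subLeft s).surjective.range_comp d.left) a
  · rw [inr_mem_verts, inr_mem_verts]
    rcases g with s | s
    · exact Set.ext_iff.1 ((Equiv.addRight s).surjective.range_comp d.right) b
    · exact Set.ext_iff.1
        (((Equiv.subLeft s).trans (Equiv.subRight 1)).surjective.range_comp d.right) b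

end Verts

end Dihedral

section Lift

variable {α β A : Type*} [AddCommGroup A] {B : α → β → Prop} {S : α → β → A} {l : ℕ}

/-- The bipartite graph obtained from `B` by replacing each vertex by a copy of `A` and each edge
`(a, b)` by the perfect matching with shift `S a b`. -/
def liftRel (B : α → β → Prop) (S : α → β → A) (x : α × A) (y : β × A) : Prop :=
  B x.1 y.1 ∧ x.2 = y.2 + S x.1 y.1

/-- The projection to `B` of a sequence in the lift. -/
def base (d : AlternatingSeq (α × A) (β × A) l) : AlternatingSeq α β l :=
  d.map Prod.fst Prod.fst

/-- The deck transformations of the lift: `r : A` is added to the second component of every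
vertex. -/
def translate (r : A) (d : AlternatingSeq (α × A) (β × A) l) :
    AlternatingSeq (α × A) (β × A) l :=
  d.map (Prod.map id (· + r)) (Prod.map id (· + r))

/-- The cyclic sequences over `B` that some cycle of the lift projects to. For `A = ℤ_m` these are
the allowable `2l`-cycle chains. -/
def allowable (B : α → β → Prop) (S : α → β → A) (l : ℕ) : Set (AlternatingSeq α β l) :=
  base '' {d | d.IsCycle (liftRel B S)}

theorem translate_zero (d : AlternatingSeq (α × A) (β × A) l) : d.translate 0 = d := by
  ext <;> simp [translate, map]

theorem translate_add (r s : A) (d : AlternatingSeq (α × A) (β × A) l) :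
    d.translate (r + s) = (d.translate r).translate s := by
  ext <;> simp [translate, map, add_assoc]

theorem base_translate (r : A) (d : AlternatingSeq (α × A) (β × A) l) :
    (d.translate r).base = d.base := rfl

theorem IsCycle.translate {d : AlternatingSeq (α × A) (β × A) l} (hd : d.IsCycle (liftRel B S))
    (r : A) : (d.translate r).IsCycle (liftRel B S) := by
  have liftRel_shift {x : α × A} {y : β × A} (h : liftRel B S x y) :
      liftRel B S (Prod.map id (· + r) x) (Prod.map id (· + r) y) :=
    ⟨h.1, by simp only [Prod.map_fst, Prod.map_snd, id, h.2, add_right_comm]⟩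
  exact ⟨(Function.injective_id.prodMap (add_left_injective r)).comp hd.left_injective,
    (Function.injective_id.prodMap (add_left_injective r)).comp hd.right_injective,
    fun t => liftRel_shift (hd.rel t), fun t => liftRel_shift (hd.rel_succ t)⟩

theorem IsCycle.snd_left_add_one {d : AlternatingSeq (α × A) (β × A) l}
    (hd : d.IsCycle (liftRel B S)) (t : ZMod l) :
    (d.left (t + 1)).2 = (d.left t).2 - S (d.base.left t) (d.base.right t) +
      S (d.base.left (t + 1)) (d.base.right t) := by
  rw [(hd.rel_succ t).2, (hd.rel t).2]
  exact (congrArg (· + _) (add_sub_cancel_right _ _)).symm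

theorem IsCycle.snd_right {d : AlternatingSeq (α × A) (β × A) l}
    (hd : d.IsCycle (liftRel B S)) (t : ZMod l) :
    (d.right t).2 = (d.left t).2 - S (d.base.left t) (d.base.right t) := by
  rw [(hd.rel t).2]
  exact (add_sub_cancel_right _ _).symm

theorem IsCycle.eq_translate_of_base_eq [NeZero l] {d d' : AlternatingSeq (α × A) (β × A) l}
    (hd : d.IsCycle (liftRel B S)) (hd' : d'.IsCycle (liftRel B S)) (hbase : d'.base = d.base) :
    d' = d.translate ((d'.left 0).2 - (d.left 0).2) := by
  have hnat (t : ℕ) : (d'.left t).2 = (d.left t).2 + ((d'.left 0).2 - (d.left 0).2) := by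
    induction t with
    | zero => simp
    | succ t ih => rw [Nat.cast_succ, hd'.snd_left_add_one, hd.snd_left_add_one, hbase, ih]; abel
  have hleft (t : ZMod l) : (d'.left t).2 = (d.left t).2 + ((d'.left 0).2 - (d.left 0).2) := by
    simpa using hnat t.val
  have hright (t : ZMod l) : (d'.right t).2 = (d.right t).2 + ((d'.left 0).2 - (d.left 0).2) := by
    rw [hd'.snd_right, hd.snd_right, hbase, hleft, add_sub_right_comm]
  exact AlternatingSeq.ext
    (funext fun t => Prod.ext (congrFun (congrArg left hbase) t) (hleft t))
    (funext fun t => Prod.ext (congrFun (congrArg right hbase) t) (hright t))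

theorem ncard_isCycle_liftRel [NeZero l] :
    {d : AlternatingSeq (α × A) (β × A) l | d.IsCycle (liftRel B S)}.ncard =
      (allowable B S l).ncard * Nat.card A := by
  have hbij : Set.BijOn (fun d => (d.base, (d.left 0).2))
      {d : AlternatingSeq (α × A) (β × A) l | d.IsCycle (liftRel B S)}
      (allowable B S l ×ˢ Set.univ) := by
    refine ⟨fun d hd => ⟨⟨d, hd, rfl⟩, trivial⟩, fun d hd d' hd' h => ?_, ?_⟩
    · obtain ⟨hbase, hroot⟩ := Prod.mk.inj h
      rw [hd'.eq_translate_of_base_eq hd hbase, hroot, sub_self, translate_zero]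
    · rintro ⟨-, r⟩ ⟨⟨d, hd, rfl⟩, -⟩
      exact ⟨d.translate (r - (d.left 0).2), hd.translate _,
        Prod.ext rfl (add_sub_cancel _ _)⟩
  rw [hbij.ncard_eq, Set.ncard_prod, Set.ncard_univ]

section Base

variable [Fact (1 < l)] {x : AlternatingSeq α β l}

theorem left_ne_left_add_one_of_mem_allowable (hx : x ∈ allowable B S l) (t : ZMod l) :
    x.left t ≠ x.left (t + 1) := by
  obtain ⟨d, hd, rfl⟩ := hx
  intro h
  have heq : d.left t = d.left (t + 1) := Prod.ext h <| by
    rw [hd.snd_left_add_one, h, sub_add_cancel]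
  simpa using hd.left_injective heq

theorem right_ne_right_add_one_of_mem_allowable (hx : x ∈ allowable B S l) (t : ZMod l) :
    x.right t ≠ x.right (t + 1) := by
  obtain ⟨d, hd, rfl⟩ := hx
  intro h
  have heq : d.right t = d.right (t + 1) := Prod.ext h <| by
    rw [hd.snd_right, hd.snd_right, hd.snd_left_add_one, h, add_sub_cancel_right]
  simpa using hd.right_injective heq

end Base

theorem smul_mem_allowable {x : AlternatingSeq α β l} (hx : x ∈ allowable B S l)
    (g : DihedralGroup l) : g • x ∈ allowable B S l := by
  obtain ⟨d, hd, rfl⟩ := hx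
  exact ⟨g • d, hd.smul g, map_smul _ _ g d⟩

section Verts

variable [NeZero l] [DecidableEq α] [DecidableEq β] [DecidableEq A]

theorem verts_translate_add (r s : A) (d : AlternatingSeq (α × A) (β × A) l) :
    (d.translate (r + s)).verts =
      (d.translate r).verts.image (Sum.map (Prod.map id (· + s)) (Prod.map id (· + s))) := by
  rw [translate_add, translate, verts_map]

variable [Fintype A]

theorem card_image_verts_translate_mul_card_fiber (d : AlternatingSeq (α × A) (β × A) l) :
    (Finset.univ.image fun r : A => (d.translate r).verts).card *
      (Finset.univ.filter fun r : A => (d.translate r).verts = (d.translate 0).verts).card =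
        Fintype.card A :=
  card_image_mul_card_fiber
    (fun r r' s h => by rw [verts_translate_add, h, ← verts_translate_add]) 0

theorem card_fiber_verts_translate_lt {d : AlternatingSeq (α × A) (β × A) l} {t : ZMod l}
    (ht : (d.left t).1 ≠ (d.left 0).1) :
    (Finset.univ.filter fun r : A => (d.translate r).verts = (d.translate 0).verts).card < l := by
  set fiber := Finset.univ.filter fun r : A => (d.translate r).verts = (d.translate 0).verts
  -- A translation preserving the vertex set moves `d.left 0` to some `d.left u`, and `u ≠ t`
  -- because the base vertex does not change.
  have himage : fiber.image (fun r => ((d.left 0).1, (d.left 0).2 + r)) ⊆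
      (Finset.univ.erase t).image d.left := by
    intro x hx
    obtain ⟨r, hr, rfl⟩ := Finset.mem_image.1 hx
    have hmem : Sum.inl ((d.left 0).1, (d.left 0).2 + r) ∈ (d.translate r).verts :=
      inl_mem_verts.2 ⟨0, rfl⟩
    rw [(Finset.mem_filter.1 hr).2, translate_zero, inl_mem_verts] at hmem
    obtain ⟨u, hu⟩ := hmem
    refine Finset.mem_image.2 ⟨u, Finset.mem_erase.2 ⟨?_, Finset.mem_univ u⟩, hu⟩
    rintro rfl
    simp [hu] at ht
  calc fiber.card = (fiber.image fun r => ((d.left 0).1, (d.left 0).2 + r)).card :=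
        (Finset.card_image_of_injective _ fun r s h => add_left_cancel (Prod.mk.inj h).2).symm
    _ ≤ ((Finset.univ.erase t).image d.left).card := Finset.card_le_card himage
    _ ≤ (Finset.univ.erase t).card := Finset.card_image_le
    _ < Fintype.card (ZMod l) := Finset.card_lt_univ_of_notMem (Finset.notMem_erase t _)
    _ = l := ZMod.card l

theorem injective_verts_translate (hl : l ≤ (Fintype.card A).minFac)
    {d : AlternatingSeq (α × A) (β × A) l} {t : ZMod l} (ht : (d.left t).1 ≠ (d.left 0).1) :
    Function.Injective fun r : A => (d.translate r).verts := by
  have hmul := card_image_verts_translate_mul_card_fiber d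
  have hlt := card_fiber_verts_translate_lt ht
  set fiber := Finset.univ.filter fun r : A => (d.translate r).verts = (d.translate 0).verts
  have hpos : 0 < fiber.card := Finset.card_pos.2 ⟨0, by simp [fiber]⟩
  have hone : fiber.card = 1 := by
    by_contra hne
    have := Nat.minFac_le_of_dvd (by omega) (Dvd.intro_left _ hmul)
    omega
  rw [hone, mul_one, ← Finset.card_univ] at hmul
  simpa using Finset.card_image_iff.1 hmul

end Verts

theorem eq_one_of_smul_eq_of_mem_allowable [Fintype A] [Fact (1 < l)]
    (hl : l ≤ (Fintype.card A).minFac) {x : AlternatingSeq α β l} (hx : x ∈ allowable B S l)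
    {g : DihedralGroup l} (hg : g • x = x) : g = 1 := by
  classical
  have : NeZero l := NeZero.of_gt (Fact.out : 1 < l)
  have hleft := left_ne_left_add_one_of_mem_allowable hx
  rcases g with s | s
  · obtain ⟨d, hd, rfl⟩ := hx
    have htranslate := hd.eq_translate_of_base_eq (hd.smul (.r s)) ((map_smul _ _ _ d).trans hg)
    set σ := (((DihedralGroup.r s • d).left 0).2 - (d.left 0).2)
    have hσ : σ = 0 := injective_verts_translate hl (hleft 0).symm <| by
      simp only [← htranslate, verts_smul, translate_zero]
    rw [hσ, translate_zero] at htranslate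
    have hs : s = 0 := hd.left_injective (by
      simpa [r_smul] using congrFun (congrArg left htranslate) 0)
    rw [hs, DihedralGroup.r_zero]
  · exact absurd hg
      (sr_smul_ne_self hleft (right_ne_right_add_one_of_mem_allowable hx) s)

end Lift

end AlternatingSeq

section Chains

variable {v k m l : ℕ} {Bl : Fin k → Finset (Fin v)} {S : Fin v → Fin k → ZMod m}
  {i : ℕ → Fin v} {j : ℕ → Fin k} {c c' : (ℕ → Fin v) × (ℕ → Fin k)}

theorem IsQcCycleChain.one_lt (h : IsQcCycleChain v k m l Bl S i j) (hl : 0 < l) : 1 < l := by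
  obtain ⟨hclosed, hstep, -⟩ := h
  refine lt_of_le_of_ne hl ?_
  rintro rfl
  exact (hstep 0 hl).2.2.1 hclosed.symm

theorem IsQcCycleChain.chainN_lt (h : IsQcCycleChain v k m l Bl S i j) (hl : 0 < l) :
    chainN v k l i j < l := by
  have hl1 := h.one_lt hl
  unfold chainN
  split_ifs with hne
  · obtain ⟨hpos, -, hperiod⟩ : chainE v k l i j ∈ chainPeriods v k l i j := Nat.sInf_mem hne
    have hne_one : chainE v k l i j ≠ 1 := fun hone => by
      have hfirst := hperiod 0 hl
      rw [hone, add_zero, Nat.mod_eq_of_lt hl1] at hfirst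
      exact (h.2.1 0 hl).2.2.1 (Prod.mk.inj hfirst).1.symm
    exact Nat.div_lt_self hl (by omega)
  · exact hl1

theorem qcRow_add (r s : ZMod m) (t : ℕ) :
    qcRow v k m S i j (r + s) t = qcRow v k m S i j r t + s := by
  induction t with
  | zero => rfl
  | succ t ih => rw [qcRow, qcRow, ih]; ring

theorem qcRow_eq_sub_sum (r : ZMod m) (t : ℕ) :
    qcRow v k m S i j r t =
      r - ∑ u ∈ Finset.range t, (S (i u) (j u) - S (i (u + 1)) (j u)) := by
  induction t with
  | zero => simp [qcRow]
  | succ t ih => rw [qcRow, ih, Finset.sum_range_succ]; ring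

theorem qcTannerGraph_adj_iff {x : Fin v × ZMod m} {y : Fin k × ZMod m} :
    (qcTannerGraph v k m Bl S).Adj (.inl x) (.inr y) ↔
      AlternatingSeq.liftRel (fun i j => i ∈ Bl j) S x y := by
  obtain ⟨i, r⟩ := x
  obtain ⟨j, s⟩ := y
  simp [qcTannerGraph, AlternatingSeq.liftRel, and_comm]

theorem qcTannerGraph_isBipartiteWith :
    (qcTannerGraph v k m Bl S).IsBipartiteWith (Set.range Sum.inl) (Set.range Sum.inr) where
  disjoint := Set.isCompl_range_inl_range_inr.disjoint
  mem_of_adj x y h := by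
    rcases x with x | x <;> rcases y with y | y <;> simp [qcTannerGraph] at h ⊢

/-- The cyclic sequence formed by the first `l` entries of a chain. -/
def chainSeq (l : ℕ) (c : (ℕ → Fin v) × (ℕ → Fin k)) : AlternatingSeq (Fin v) (Fin k) l where
  left t := c.1 t.val
  right t := c.2 t.val

/-- The periodic chain repeating a cyclic sequence. -/
def seqChain (x : AlternatingSeq (Fin v) (Fin k) l) : (ℕ → Fin v) × (ℕ → Fin k) :=
  (fun t => x.left t, fun t => x.right t)

/-- The closed walk traced by a chain from row index `r`, as a cyclic sequence of nodes. -/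
def tracedSeq (S : Fin v → Fin k → ZMod m) (l : ℕ) (i : ℕ → Fin v) (j : ℕ → Fin k) (r : ZMod m) :
    AlternatingSeq (Fin v × ZMod m) (Fin k × ZMod m) l where
  left t := (i t.val, qcRow v k m S i j r t.val)
  right t := (j t.val, qcCol v k m S i j r t.val)

theorem tracedSeq_eq_translate (r : ZMod m) :
    tracedSeq S l i j r = (tracedSeq S l i j 0).translate r := by
  have hrow (t : ℕ) : qcRow v k m S i j r t = qcRow v k m S i j 0 t + r := by
    rw [← qcRow_add, zero_add]
  have hcol (t : ℕ) : qcCol v k m S i j r t = qcCol v k m S i j 0 t + r := by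
    rw [qcCol, hrow, qcCol, add_sub_right_comm]
  ext t <;> simp [tracedSeq, AlternatingSeq.translate, AlternatingSeq.map, hrow, hcol]

section PositiveLength

variable [NeZero l]

theorem image_zmodVal_univ : (Finset.univ : Finset (ZMod l)).image ZMod.val = Finset.range l := by
  ext p
  simp only [Finset.mem_image, Finset.mem_univ, true_and, Finset.mem_range]
  exact ⟨fun ⟨t, ht⟩ => ht ▸ t.val_lt, fun hp => ⟨p, ZMod.val_cast_of_lt hp⟩⟩

theorem apply_zmodVal_add_one {α : Type*} {f : ℕ → α} (hf : f l = f 0) (t : ZMod l) :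
    f (t + 1).val = f (t.val + 1) := by
  have hval : (t + 1).val = (t.val + 1) % l := by
    rw [ZMod.val_add, ZMod.val_one_eq_one_mod, Nat.add_mod_mod]
  rcases (Nat.add_one_le_of_lt t.val_lt).lt_or_eq with h | h
  · rw [hval, Nat.mod_eq_of_lt h]
  · rw [hval, h, Nat.mod_self, hf]

theorem qcWalkVerts_eq_verts_translate (r : ZMod m) :
    qcWalkVerts v k m l S i j r = ((tracedSeq S l i j 0).translate r).verts := by
  rw [← tracedSeq_eq_translate, qcWalkVerts, AlternatingSeq.verts, ← image_zmodVal_univ,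
    Finset.image_image, Finset.image_image]
  rfl

theorem card_image_qcWalkVerts_dvd [NeZero m] :
    (Finset.univ.image fun r : ZMod m => qcWalkVerts v k m l S i j r).card ∣ m := by
  simp only [qcWalkVerts_eq_verts_translate]
  have hmul := AlternatingSeq.card_image_verts_translate_mul_card_fiber (tracedSeq S l i j 0)
  rw [ZMod.card] at hmul
  exact Dvd.intro _ hmul

theorem IsQcCycleChain.card_image_qcWalkVerts [NeZero m]
    (h : IsQcCycleChain v k m l Bl S i j) (hlm : l ≤ m.minFac) :
    (Finset.univ.image fun r : ZMod m => qcWalkVerts v k m l S i j r).card = m := by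
  have hl : 0 < l := NeZero.pos l
  have hne : ((tracedSeq S l i j 0).left 1).1 ≠ ((tracedSeq S l i j 0).left 0).1 := by
    have : Fact (1 < l) := ⟨h.one_lt hl⟩
    simpa [tracedSeq, ZMod.val_one] using (h.2.1 0 hl).2.2.1.symm
  simp only [qcWalkVerts_eq_verts_translate]
  rw [Finset.card_image_of_injective _ (AlternatingSeq.injective_verts_translate
    (by rwa [ZMod.card]) hne), Finset.card_univ, ZMod.card]

theorem IsQcCycleChain.isCycle_tracedSeq (h : IsQcCycleChain v k m l Bl S i j)
    (hallow : QcAllowable v k m l S i j) (r : ZMod m) :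
    (tracedSeq S l i j r).IsCycle (AlternatingSeq.liftRel (fun i j => i ∈ Bl j) S) := by
  obtain ⟨hclosed, hstep, hsum⟩ := h
  have hrow : qcRow v k m S i j r l = qcRow v k m S i j r 0 := by
    rw [qcRow_eq_sub_sum, hsum, sub_zero, qcRow]
  refine ⟨fun p q hpq => ?_, fun p q hpq => ?_, fun t => ⟨(hstep _ t.val_lt).1, ?_⟩, fun t => ?_⟩
  · by_contra hne
    exact (hallow r _ _ p.val_lt q.val_lt ((ZMod.val_injective l).ne hne)).1 hpq
  · by_contra hne
    exact (hallow r _ _ p.val_lt q.val_lt ((ZMod.val_injective l).ne hne)).2 hpq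
  · exact (sub_add_cancel _ _).symm
  · simp only [tracedSeq, AlternatingSeq.liftRel, apply_zmodVal_add_one hclosed t,
      apply_zmodVal_add_one hrow t]
    exact ⟨(hstep _ t.val_lt).2.1, rfl⟩

theorem chainSeq_mem_allowable (h : IsQcCycleChain v k m l Bl S c.1 c.2)
    (hallow : QcAllowable v k m l S c.1 c.2) :
    chainSeq l c ∈ AlternatingSeq.allowable (fun i j => i ∈ Bl j) S l :=
  ⟨tracedSeq S l c.1 c.2 0, h.isCycle_tracedSeq hallow 0, rfl⟩

theorem chainSeq_seqChain (x : AlternatingSeq (Fin v) (Fin k) l) : chainSeq l (seqChain x) = x := by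
  simp [chainSeq, seqChain]

theorem chainSeq_eq_r_smul_iff {t : ℕ} :
    chainSeq l c' = DihedralGroup.r (t : ZMod l) • chainSeq l c ↔
      ∀ p < l, c'.1 p = c.1 ((p + t) % l) ∧ c'.2 p = c.2 ((p + t) % l) := by
  have hval (p : ZMod l) : (p + t).val = (p.val + t) % l := by
    rw [ZMod.val_add, ZMod.val_natCast, Nat.add_mod_mod]
  simp only [AlternatingSeq.ext_iff, funext_iff, ← forall_and, ← Finset.mem_range,
    ← image_zmodVal_univ, Finset.forall_mem_image, Finset.mem_univ, true_imp_iff]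
  simp only [AlternatingSeq.r_smul, chainSeq, hval]

theorem chainSeq_eq_sr_smul_iff {t : ℕ} :
    chainSeq l c' = DihedralGroup.sr (t : ZMod l) • chainSeq l c ↔
      ∀ p < l, c'.1 p = c.1 ((t + (l - p)) % l) ∧
        c'.2 p = c.2 ((t + (l - p) + (l - 1)) % l) := by
  have hval (p : ZMod l) : (t - p).val = (t + (l - p.val)) % l := by
    rw [← ZMod.val_natCast, Nat.cast_add, Nat.cast_sub p.val_lt.le]
    simp [sub_eq_add_neg]
  have hval_pred (p : ZMod l) : (t - p - 1).val = (t + (l - p.val) + (l - 1)) % l := by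
    rw [← ZMod.val_natCast, Nat.cast_add, Nat.cast_add, Nat.cast_sub p.val_lt.le,
      Nat.cast_sub NeZero.one_le]
    simp [sub_eq_add_neg]
  simp only [AlternatingSeq.ext_iff, funext_iff, ← forall_and, ← Finset.mem_range,
    ← image_zmodVal_univ, Finset.forall_mem_image, Finset.mem_univ, true_imp_iff]
  simp only [AlternatingSeq.sr_smul, chainSeq, hval, hval_pred]

theorem chainIso_iff_chainSeq_mem_orbit :
    ChainIso v k l c c' ↔ chainSeq l c' ∈ MulAction.orbit (DihedralGroup l) (chainSeq l c) := by
  simp only [ChainIso, ← chainSeq_eq_r_smul_iff, ← chainSeq_eq_sr_smul_iff]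
  constructor
  · rintro ⟨t, h | h⟩ <;> exact ⟨_, h.symm⟩
  · rintro ⟨s | s, h⟩ <;> refine ⟨s.val, ?_⟩ <;> rw [ZMod.natCast_zmod_val]
    · exact .inl h.symm
    · exact .inr h.symm

end PositiveLength

section LiftsOfCycles

variable {d : AlternatingSeq (Fin v × ZMod m) (Fin k × ZMod m) l}

theorem qcRow_seqChain_base
    (hd : d.IsCycle (AlternatingSeq.liftRel (fun i j => i ∈ Bl j) S)) (t : ℕ) :
    qcRow v k m S (seqChain d.base).1 (seqChain d.base).2 (d.left 0).2 t = (d.left t).2 := by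
  induction t with
  | zero => simp [qcRow]
  | succ t ih =>
    rw [qcRow, ih, Nat.cast_succ, hd.snd_left_add_one]
    simp [seqChain]

theorem qcCol_seqChain_base
    (hd : d.IsCycle (AlternatingSeq.liftRel (fun i j => i ∈ Bl j) S)) (t : ℕ) :
    qcCol v k m S (seqChain d.base).1 (seqChain d.base).2 (d.left 0).2 t = (d.right t).2 := by
  rw [qcCol, qcRow_seqChain_base hd, hd.snd_right]
  rfl

theorem qcAllowable_seqChain_base
    (hd : d.IsCycle (AlternatingSeq.liftRel (fun i j => i ∈ Bl j) S)) :
    QcAllowable v k m l S (seqChain d.base).1 (seqChain d.base).2 := by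
  intro r p q hp hq hne
  wlog hr : (d.left 0).2 = r generalizing d
  · have hroot : ((d.translate (r - (d.left 0).2)).left 0).2 = r := add_sub_cancel _ _
    simpa only [AlternatingSeq.base_translate] using this (hd.translate _) hroot
  have hcast : (p : ZMod l) ≠ q := fun h =>
    hne (((ZMod.natCast_eq_natCast_iff _ _ _).1 h).eq_of_lt_of_lt hp hq)
  subst hr
  simp only [qcRow_seqChain_base hd, qcCol_seqChain_base hd]
  exact ⟨hd.left_injective.ne hcast, hd.right_injective.ne hcast⟩

theorem isQcCycleChain_seqChain_base [Fact (1 < l)]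
    (hd : d.IsCycle (AlternatingSeq.liftRel (fun i j => i ∈ Bl j) S)) :
    IsQcCycleChain v k m l Bl S (seqChain d.base).1 (seqChain d.base).2 := by
  have hmem : d.base ∈ AlternatingSeq.allowable (fun i j => i ∈ Bl j) S l := ⟨d, hd, rfl⟩
  refine ⟨by simp [seqChain], fun t _ => ⟨(hd.rel t).1, ?_, ?_, ?_⟩, ?_⟩
  · simpa [seqChain, AlternatingSeq.base, AlternatingSeq.map] using (hd.rel_succ t).1
  · simpa [seqChain] using AlternatingSeq.left_ne_left_add_one_of_mem_allowable hmem t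
  · simpa [seqChain] using AlternatingSeq.right_ne_right_add_one_of_mem_allowable hmem t
  · simpa [qcRow_eq_sub_sum] using qcRow_seqChain_base hd l

end LiftsOfCycles

theorem ncard_allowable_eq_two_mul_mul_ncard [NeZero m] (hl : 1 < l) (hlm : l ≤ m.minFac)
    {R : Set ((ℕ → Fin v) × (ℕ → Fin k))}
    (hR : ∀ c ∈ R, IsQcCycleChain v k m l Bl S c.1 c.2 ∧ QcAllowable v k m l S c.1 c.2)
    (hunique : ∀ c : (ℕ → Fin v) × (ℕ → Fin k), IsQcCycleChain v k m l Bl S c.1 c.2 →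
      QcAllowable v k m l S c.1 c.2 → ∃! c', c' ∈ R ∧ ChainIso v k l c c') :
    (AlternatingSeq.allowable (fun i j => i ∈ Bl j) S l).ncard = 2 * l * R.ncard := by
  have : NeZero l := NeZero.of_gt hl
  have : Fact (1 < l) := ⟨hl⟩
  rw [← DihedralGroup.nat_card]
  refine ncard_eq_card_mul_ncard_of_existsUnique_mem_orbit (f := chainSeq l)
    (fun g x hx => AlternatingSeq.smul_mem_allowable hx g)
    (fun x hx g => AlternatingSeq.eq_one_of_smul_eq_of_mem_allowable (by rwa [ZMod.card]) hx)
    (fun c hc => chainSeq_mem_allowable (hR c hc).1 (hR c hc).2) fun x hx => ?_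
  obtain ⟨d, hd, rfl⟩ := hx
  simpa only [chainIso_iff_chainSeq_mem_orbit, chainSeq_seqChain] using
    hunique (seqChain d.base) (isQcCycleChain_seqChain_base hd) (qcAllowable_seqChain_base hd)

theorem ncard_isCycle_qcTannerGraph [NeZero m] (hl : 0 < l) (hlm : l ≤ m.minFac)
    {R : Set ((ℕ → Fin v) × (ℕ → Fin k))}
    (hR : ∀ c ∈ R, IsQcCycleChain v k m l Bl S c.1 c.2 ∧ QcAllowable v k m l S c.1 c.2)
    (hunique : ∀ c : (ℕ → Fin v) × (ℕ → Fin k), IsQcCycleChain v k m l Bl S c.1 c.2 →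
      QcAllowable v k m l S c.1 c.2 → ∃! c', c' ∈ R ∧ ChainIso v k l c c') :
    Set.ncard {p : (u : TannerVertex v k m) × (qcTannerGraph v k m Bl S).Walk u u |
      p.2.IsCycle ∧ p.2.length = 2 * l} = 4 * l * (m * R.ncard) := by
  rcases (Nat.one_le_of_lt hl).lt_or_eq with hl1 | rfl
  · have : NeZero l := NeZero.of_gt hl1
    rw [ncard_isCycle_two_mul_eq hl1 qcTannerGraph_isBipartiteWith]
    simp only [qcTannerGraph_adj_iff]
    rw [AlternatingSeq.ncard_isCycle_liftRel,
      ncard_allowable_eq_two_mul_mul_ncard hl1 hlm hR hunique, Nat.card_zmod]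
    ring
  · have hwalks : {p : (u : TannerVertex v k m) × (qcTannerGraph v k m Bl S).Walk u u |
        p.2.IsCycle ∧ p.2.length = 2 * 1} = ∅ :=
      Set.eq_empty_of_forall_notMem fun p ⟨hp, hlen⟩ => by
        have := hp.three_le_length
        omega
    have hempty : R = ∅ :=
      Set.eq_empty_of_forall_notMem fun c hc => lt_irrefl 1 ((hR c hc).1.one_lt one_pos)
    rw [hwalks, hempty, Set.ncard_empty, Set.ncard_empty, mul_zero, mul_zero]

end Chains

theorem prime_cpm_size_cycle_count_general
    (v k m l : ℕ) [NeZero m] (hl : 0 < l)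
    (Bl : Fin k → Finset (Fin v)) (S : Fin v → Fin k → ZMod m) :
    (∀ (i : ℕ → Fin v) (j : ℕ → Fin k),
      (Finset.univ.image fun r : ZMod m => qcWalkVerts v k m l S i j r).card ∣ m) ∧
    (l ≤ m.minFac →
      (∀ (i : ℕ → Fin v) (j : ℕ → Fin k), IsQcCycleChain v k m l Bl S i j →
        chainN v k l i j < m ∧
          (Finset.univ.image fun r : ZMod m => qcWalkVerts v k m l S i j r).card = m) ∧
      (∀ R : Set ((ℕ → Fin v) × (ℕ → Fin k)),
        (∀ c ∈ R, IsQcCycleChain v k m l Bl S c.1 c.2 ∧ QcAllowable v k m l S c.1 c.2) →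
        (∀ c : (ℕ → Fin v) × (ℕ → Fin k),
          IsQcCycleChain v k m l Bl S c.1 c.2 → QcAllowable v k m l S c.1 c.2 →
            ∃! c', c' ∈ R ∧ ChainIso v k l c c') →
        Set.ncard {p : (u : TannerVertex v k m) × (qcTannerGraph v k m Bl S).Walk u u |
          p.2.IsCycle ∧ p.2.length = 2 * l} = 4 * l * (m * R.ncard))) := by
  have : NeZero l := NeZero.of_pos hl
  refine ⟨fun i j => card_image_qcWalkVerts_dvd, fun hlm => ⟨fun i j h => ⟨?_, ?_⟩, ?_⟩⟩
  · exact (h.chainN_lt hl).trans_le (hlm.trans (Nat.minFac_le (NeZero.pos m)))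
  · exact h.card_image_qcWalkVerts hlm
  · exact fun R hR hunique => ncard_isCycle_qcTannerGraph hl hlm hR hunique

theorem prime_cpm_size_cycle_count
    (v k m l : ℕ) [NeZero m] (hp : m.Prime) (hl : 0 < l)
    (Bl : Fin k → Finset (Fin v)) (S : Fin v → Fin k → ZMod m) :
    -- In general, when `m` is prime, `r(L) = 1` or `r(L) = m`:
    (∀ (i : ℕ → Fin v) (j : ℕ → Fin k),
      IsQcCycleChain v k m l Bl S i j → QcAllowable v k m l S i j →
        ((Finset.image (fun r : ZMod m => qcWalkVerts v k m l S i j r)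
            Finset.univ).card = 1 ∨
         (Finset.image (fun r : ZMod m => qcWalkVerts v k m l S i j r)
            Finset.univ).card = m)) ∧
    (l ≤ m →
      -- every allowable 2l-cycle chain has `n(L) < m` and yields `r(L) = m`
      -- distinct 2l-cycles:
      (∀ (i : ℕ → Fin v) (j : ℕ → Fin k),
        IsQcCycleChain v k m l Bl S i j → QcAllowable v k m l S i j →
          chainN v k l i j < m ∧
          (Finset.image (fun r : ZMod m => qcWalkVerts v k m l S i j r)
            Finset.univ).card = m) ∧
      -- consequently, for any complete set `R` of representatives of the
      -- isomorphism classes of allowable 2l-cycle chains, the number of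
      -- 2l-cycles in the Tanner graph (counted as closed cycle walks, each
      -- cycle being traversed by exactly `4l` of them) equals `m * |R|`:
      (∀ R : Set ((ℕ → Fin v) × (ℕ → Fin k)),
        (∀ c ∈ R, IsQcCycleChain v k m l Bl S c.1 c.2 ∧
          QcAllowable v k m l S c.1 c.2) →
        (∀ c : (ℕ → Fin v) × (ℕ → Fin k),
          IsQcCycleChain v k m l Bl S c.1 c.2 → QcAllowable v k m l S c.1 c.2 →
            ∃! c', c' ∈ R ∧ ChainIso v k l c c') →
        Set.ncard {p : (u : TannerVertex v k m) ×
            (qcTannerGraph v k m Bl S).Walk u u |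
          p.2.IsCycle ∧ p.2.length = 2 * l} = 4 * l * (m * R.ncard))) := by
  obtain ⟨hdvd, hcount⟩ := prime_cpm_size_cycle_count_general v k m l hl Bl S
  rw [hp.minFac_eq] at hcount
  exact ⟨fun i j _ _ => (Nat.dvd_prime hp).1 (hdvd i j), fun hlm =>
    ⟨fun i j h _ => (hcount hlm).1 i j h, (hcount hlm).2⟩⟩
end
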